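/- Let k be an algebraically closed field of characteristic 2, let d ≥ 2, let A = k[[x_0,…,x_d]] be the formal power series ring with maximal ideal 𝔪 (the ideal generated by the variables), and let F ∈ 𝔪² with F ≠ 0 (so A/(F) is a non-regular hypersurface ring of dimension d). Then either there is a ring isomorphism A/(F) ≅ A/(Q_d), or the liminf as e → ∞ of the real sequence e ↦ dim_k( A/((F) + (x_0^{2^e},…,x_d^{2^e})) ) / 2^{d·e} is at least s_d, where s_d = (2^{m+1} + 1)/(2^{m+1} − 1) if d = 2m is even and s_d = (2^{m−1} + 1)/2^{m−1} if d = 2m − 1 is odd. (Here s_d = e_HK(S_{2,d}), the Hilbert–Kunz multiplicity of the A_2 singularity in characteristic 2, which strictly exceeds e_HK(R_{2,d}).) -/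

import Mathlib

open MvPowerSeries

/-- The Hilbert–Kunz function of the hypersurface `A/(F)`, where
`A = k[[x_0,…,x_d]]`, in characteristic `p`, at level `e`:
`dim_k A/((F) + (x_0^{p^e},…,x_d^{p^e}))`. -/
noncomputable def HKps (k : Type*) [Field k] (d p e : ℕ)
    (F : MvPowerSeries (Fin (d + 1)) k) : ℕ :=
  Module.finrank k
    (MvPowerSeries (Fin (d + 1)) k ⧸
      Ideal.span
        ({F} ∪ Set.range
          (fun i : Fin (d + 1) => (X i : MvPowerSeries (Fin (d + 1)) k) ^ p ^ e)))

/-- The defining equation `Q_d` of the `A₁` singularity in characteristic 2, as a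
power series: `Q_d = x_0x_1 + x_2x_3 + ⋯ + x_{d−1}x_d` for `d` odd and
`Q_d = x_0x_1 + ⋯ + x_{d−2}x_{d−1} + x_d²` for `d` even. -/
noncomputable def A1ps (k : Type*) [Field k] (d : ℕ) : MvPowerSeries (Fin (d + 1)) k :=
  (∑ i : Fin ((d + 1) / 2),
      (X (⟨2 * i, by omega⟩ : Fin (d + 1)) : MvPowerSeries (Fin (d + 1)) k) *
        X (⟨2 * i + 1, by omega⟩ : Fin (d + 1))) +
    if Even d then (X (⟨d, by omega⟩ : Fin (d + 1)) : MvPowerSeries (Fin (d + 1)) k) ^ 2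
    else 0


namespace HKdich
set_option linter.unusedSectionVars false

section box
variable {σ : Type*} [Fintype σ] [DecidableEq σ] {k : Type*} [Field k]

noncomputable def toExp {q : ℕ} (p : σ → Fin q) : σ →₀ ℕ :=
  Finsupp.equivFunOnFinite.symm (fun i => (p i : ℕ))

@[simp] lemma toExp_apply {q : ℕ} (p : σ → Fin q) (i : σ) : toExp p i = p i := rfl

lemma toExp_inj {q : ℕ} {p p' : σ → Fin q} : toExp p = toExp p' ↔ p = p' := by
  constructor
  · intro h
    funext i
    have := DFunLike.congr_fun h i
    simpa [Fin.ext_iff] using this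
  · rintro rfl; rfl

lemma exists_toExp {q : ℕ} (a : σ →₀ ℕ) (h : ∀ i, a i < q) : ∃ p : σ → Fin q, toExp p = a :=
  ⟨fun i => ⟨a i, h i⟩, by ext i; rfl⟩

variable (σ k) in
noncomputable def bpi (q : ℕ) : MvPowerSeries σ k →ₗ[k] ((σ → Fin q) → k) :=
  LinearMap.pi (fun p => coeff (toExp p))

@[simp] lemma bpi_apply (q : ℕ) (f : MvPowerSeries σ k) (p : σ → Fin q) :
    bpi σ k q f p = coeff (toExp p) f := rfl

variable (σ k) in
noncomputable def biota (q : ℕ) : ((σ → Fin q) → k) →ₗ[k] MvPowerSeries σ k :=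
  ∑ p : σ → Fin q, (monomial (toExp p)).comp (LinearMap.proj p)

lemma biota_apply (q : ℕ) (v : (σ → Fin q) → k) :
    biota σ k q v = ∑ p, monomial (toExp p) (v p) := by
  simp [biota]

lemma bpi_biota (q : ℕ) (v : (σ → Fin q) → k) : bpi σ k q (biota σ k q v) = v := by
  funext p
  simp only [bpi_apply, biota_apply, map_sum, coeff_monomial, toExp_inj]
  simp

variable (σ k) in
noncomputable def Iq (q : ℕ) : Ideal (MvPowerSeries σ k) :=
  Ideal.span (Set.range (fun i : σ => (X i : MvPowerSeries σ k) ^ q))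

noncomputable def resS (q : ℕ) (s : Finset σ) (f : MvPowerSeries σ k) : MvPowerSeries σ k :=
  fun p => if ∀ i ∈ s, p i < q then coeff p f else 0

lemma coeff_resS (q : ℕ) (s : Finset σ) (f : MvPowerSeries σ k) (p : σ →₀ ℕ) :
    coeff p (resS q s f) = if ∀ i ∈ s, p i < q then coeff p f else 0 := rfl

lemma sub_resS_mem (q : ℕ) (s : Finset σ) (f : MvPowerSeries σ k) :
    f - resS q s f ∈ Iq σ k q := by
  induction s using Finset.induction_on with
  | empty =>
    have : f - resS q ∅ f = 0 := by ext p; simp [coeff_resS]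
    rw [this]; exact zero_mem _
  | insert a s ha ih =>
    have h2 : resS q s f - resS q (insert a s) f ∈ Iq σ k q := by
      have : (X a : MvPowerSeries σ k) ^ q ∣ resS q s f - resS q (insert a s) f := by
        rw [X_pow_dvd_iff]
        intro m hm
        rw [map_sub, coeff_resS, coeff_resS]
        simp [hm]
      exact Ideal.mem_of_dvd _ this (Ideal.subset_span ⟨a, rfl⟩)
    have := add_mem ih h2
    simpa using this

lemma bpi_eq_zero_iff (q : ℕ) (f : MvPowerSeries σ k) :
    bpi σ k q f = 0 ↔ f ∈ Iq σ k q := by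
  constructor
  · intro h
    have h1 := sub_resS_mem q Finset.univ f
    have : resS q Finset.univ f = 0 := by
      ext p
      rw [coeff_resS]
      split_ifs with hp
      · obtain ⟨p', rfl⟩ := exists_toExp p (fun i => hp i (Finset.mem_univ _))
        exact congrFun h p'
      · simp
    rwa [this, sub_zero] at h1
  · intro h
    obtain ⟨c, rfl⟩ := (Ideal.mem_span_range_iff_exists_fun).1 h
    funext p
    simp only [bpi_apply, map_sum, Pi.zero_apply]
    apply Finset.sum_eq_zero
    intro i _
    exact X_pow_dvd_iff.1 (Dvd.intro_left (c i) rfl) _ (p i).2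

noncomputable def TF (q : ℕ) (F : MvPowerSeries σ k) : Module.End k ((σ → Fin q) → k) :=
  (bpi σ k q).comp ((LinearMap.mulLeft k F).comp (biota σ k q))

lemma TF_bpi (q : ℕ) (F g : MvPowerSeries σ k) :
    TF q F (bpi σ k q g) = bpi σ k q (F * g) := by
  rw [← sub_eq_zero]
  have : TF q F (bpi σ k q g) - bpi σ k q (F * g)
      = bpi σ k q (F * (biota σ k q (bpi σ k q g) - g)) := by
    simp [TF, mul_sub]
  rw [this, bpi_eq_zero_iff]
  apply Ideal.mul_mem_left
  rw [← bpi_eq_zero_iff, map_sub, bpi_biota, sub_self]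

lemma TF_mul (q : ℕ) (F G : MvPowerSeries σ k) : TF q (F * G) = TF q F * TF q G := by
  apply LinearMap.ext; intro v
  rw [← bpi_biota q v]
  rw [Module.End.mul_apply, TF_bpi, TF_bpi, TF_bpi, mul_assoc]

lemma TF_one (q : ℕ) : TF (σ := σ) (k := k) q 1 = 1 := by
  apply LinearMap.ext; intro v
  rw [← bpi_biota q v]
  rw [TF_bpi, one_mul, Module.End.one_apply]

lemma TF_pow (q : ℕ) (F : MvPowerSeries σ k) (n : ℕ) : TF q (F ^ n) = TF q F ^ n := by
  induction n with
  | zero => simp [TF_one]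
  | succ n ih => rw [pow_succ, pow_succ, TF_mul, ih]

lemma TF_add (q : ℕ) (F G : MvPowerSeries σ k) : TF q (F + G) = TF q F + TF q G := by
  apply LinearMap.ext; intro v
  simp [TF, add_mul]

lemma TF_smul (q : ℕ) (t : k) (G : MvPowerSeries σ k) : TF q (t • G) = t • TF q G := by
  apply LinearMap.ext; intro v
  simp [TF]

lemma TF_eq_of_sub_mem (q : ℕ) (F G : MvPowerSeries σ k) (h : F - G ∈ Iq σ k q) :
    TF q F = TF q G := by
  apply LinearMap.ext; intro v
  rw [← sub_eq_zero, ← bpi_biota q v, TF_bpi, TF_bpi, ← map_sub, bpi_eq_zero_iff, ← sub_mul]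
  exact Ideal.mul_mem_right _ _ h

noncomputable def HQ (q : ℕ) (F : MvPowerSeries σ k) : ℕ :=
  Module.finrank k (MvPowerSeries σ k ⧸
      Ideal.span ({F} ∪ Set.range (fun i : σ => (X i : MvPowerSeries σ k) ^ q)))

lemma mem_span_iff (q : ℕ) (F g : MvPowerSeries σ k) :
    g ∈ Ideal.span ({F} ∪ Set.range (fun i : σ => (X i : MvPowerSeries σ k) ^ q)) ↔
      bpi σ k q g ∈ LinearMap.range (TF q F) := by
  rw [Ideal.span_union, Submodule.mem_sup]
  constructor
  · rintro ⟨y, hy, z, hz, rfl⟩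
    obtain ⟨a, rfl⟩ := Ideal.mem_span_singleton'.1 hy
    refine ⟨bpi σ k q a, ?_⟩
    rw [TF_bpi, map_add, (bpi_eq_zero_iff q z).2 hz, add_zero, mul_comm]
  · rintro ⟨v, hv⟩
    rw [← bpi_biota q v, TF_bpi] at hv
    refine ⟨F * biota σ k q v, Ideal.mul_mem_right _ _ (Ideal.mem_span_singleton_self F),
      g - F * biota σ k q v, ?_, by ring⟩
    exact (bpi_eq_zero_iff q _).1 (by rw [map_sub, hv, sub_self])

lemma HQ_eq (q : ℕ) (F : MvPowerSeries σ k) :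
    HQ q F = Module.finrank k (((σ → Fin q) → k) ⧸ LinearMap.range (TF q F)) := by
  have hs : Function.Surjective ((LinearMap.range (TF q F)).mkQ.comp (bpi σ k q)) :=
    (Submodule.mkQ_surjective _).comp (fun v => ⟨_, bpi_biota q v⟩)
  have e1 := LinearMap.quotKerEquivOfSurjective _ hs
  have hk : LinearMap.ker ((LinearMap.range (TF q F)).mkQ.comp (bpi σ k q)) =
      (Ideal.span ({F} ∪ Set.range (fun i : σ => (X i : MvPowerSeries σ k) ^ q))).restrictScalars k := by
    ext g
    rw [LinearMap.mem_ker, LinearMap.comp_apply, Submodule.mkQ_apply, Submodule.Quotient.mk_eq_zero,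
      Submodule.restrictScalars_mem, mem_span_iff]
  rw [hk] at e1
  exact (LinearEquiv.finrank_eq
    ((Submodule.Quotient.restrictScalarsEquiv k _).symm.trans e1))

lemma HQ_add (q : ℕ) (F : MvPowerSeries σ k) :
    HQ q F + Module.finrank k (LinearMap.range (TF q F)) = q ^ Fintype.card σ := by
  rw [HQ_eq, Submodule.finrank_quotient_add_finrank]
  simp

/-- semicontinuity of rank -/
lemma rank_semicont {V : Type*} [AddCommGroup V] [Module k V] [FiniteDimensional k V]
    (f g : Module.End k V) :
    {t : k | Module.finrank k (LinearMap.range (f + t • g)) <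
      Module.finrank k (LinearMap.range f)}.Finite := by
  obtain ⟨U, hU⟩ := Submodule.exists_isCompl (LinearMap.ker f)
  have hinj : LinearMap.ker (f.comp U.subtype) = ⊥ := by
    rw [LinearMap.ker_comp, ← Submodule.disjoint_iff_comap_eq_bot]
    exact hU.symm.disjoint
  obtain ⟨L, hL⟩ := LinearMap.exists_leftInverse_of_injective _ hinj
  have hrU : Module.finrank k U = Module.finrank k (LinearMap.range f) := by
    have h1 := Submodule.finrank_add_eq_of_isCompl hU
    have h2 := LinearMap.finrank_range_add_finrank_ker f
    omega
  let h : Module.End k U := L.comp (g.comp U.subtype)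
  have hfin : {μ : k | h.HasEigenvalue μ}.Finite := h.finite_hasEigenvalue
  refine (hfin.image (fun μ => -μ⁻¹)).subset ?_
  intro t ht
  simp only [Set.mem_ofPred_eq] at ht
  by_contra hcon
  apply absurd ht
  push Not
  rw [← hrU]
  have hi : Function.Injective (((f + t • g)).comp U.subtype) := by
    rw [← LinearMap.ker_eq_bot, Submodule.eq_bot_iff]
    intro u hu
    rw [LinearMap.mem_ker] at hu
    have h3 : u + t • h u = 0 := by
      have := congrArg L hu
      simp only [LinearMap.comp_apply, LinearMap.add_apply, LinearMap.smul_apply, map_add,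
        map_smul, map_zero] at this
      have h4 := LinearMap.congr_fun hL u
      simp only [LinearMap.comp_apply, LinearMap.id_apply] at h4
      rw [h4] at this
      exact this
    by_contra hu0
    have ht0 : t ≠ 0 := by
      rintro rfl
      simp at h3; exact hu0 h3
    apply hcon
    refine ⟨-t⁻¹, ?_, by simp [inv_neg]⟩
    have : h u = (-t⁻¹) • u := by
      have : t • h u = -u := by rw [eq_neg_iff_add_eq_zero, add_comm]; exact h3
      rw [neg_smul, ← smul_neg, ← this, smul_smul, inv_mul_cancel₀ ht0, one_smul]
    exact Module.End.hasEigenvalue_of_hasEigenvector (x := u)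
      ⟨Module.End.mem_eigenspace_iff.2 this, hu0⟩
  calc Module.finrank k U = Module.finrank k (LinearMap.range ((f + t • g).comp U.subtype)) :=
        (LinearMap.finrank_range_of_inj hi).symm
    _ ≤ _ := Submodule.finrank_mono (LinearMap.range_comp_le_range _ _)

lemma HQ_semicont [Infinite k] (q : ℕ) (F P : MvPowerSeries σ k) (S : Finset k) :
    ∃ t : k, t ∉ S ∧ HQ q (F + t • P) ≤ HQ q F := by
  have := rank_semicont (TF q F) (TF q P)
  obtain ⟨t, ht⟩ := (this.union S.finite_toSet).infinite_compl.nonempty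
  simp only [Set.mem_compl_iff, Set.mem_union, not_or, Set.mem_ofPred_eq, not_lt] at ht
  refine ⟨t, by simpa using ht.2, ?_⟩
  have h1 := HQ_add q F
  have h2 := HQ_add q (F + t • P)
  rw [TF_add, TF_smul] at h2
  omega

lemma ker_pow_le {V : Type*} [AddCommGroup V] [Module k V] [FiniteDimensional k V]
    (f : Module.End k V) (n : ℕ) :
    Module.finrank k (LinearMap.ker (f ^ n)) ≤ n * Module.finrank k (LinearMap.ker f) := by
  induction n with
  | zero => simp [Module.End.one_eq_id]
  | succ n ih =>
    let φ : LinearMap.ker (f ^ (n+1)) →ₗ[k] LinearMap.ker f :=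
      LinearMap.codRestrict _ ((f ^ n).comp (Submodule.subtype _)) (by
        rintro ⟨x, hx⟩
        rw [LinearMap.mem_ker] at hx ⊢
        simp only [LinearMap.comp_apply, Submodule.subtype_apply]
        rw [← Module.End.mul_apply, ← pow_succ']
        exact hx)
    have h1 := LinearMap.finrank_range_add_finrank_ker φ
    have h2 : Module.finrank k (LinearMap.range φ) ≤ Module.finrank k (LinearMap.ker f) :=
      Submodule.finrank_le _
    have h3 : Module.finrank k (LinearMap.ker φ) ≤ Module.finrank k (LinearMap.ker (f ^ n)) := by
      let ψ : LinearMap.ker φ →ₗ[k] LinearMap.ker (f ^ n) :=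
        LinearMap.codRestrict _ ((Submodule.subtype _).comp (Submodule.subtype _)) (by
          rintro ⟨x, hx⟩
          rw [LinearMap.mem_ker] at hx ⊢
          exact congrArg Subtype.val hx)
      apply LinearMap.finrank_le_finrank_of_injective (f := ψ)
      intro x y hxy
      have := congrArg Subtype.val hxy
      exact Subtype.ext (Subtype.ext this)
    rw [add_mul, one_mul]
    omega

lemma HQ_ker (q : ℕ) (F : MvPowerSeries σ k) :
    HQ q F = Module.finrank k (LinearMap.ker (TF q F)) := by
  have h1 := HQ_add q F
  have h2 := LinearMap.finrank_range_add_finrank_ker (TF q F)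
  simp only [Module.finrank_fintype_fun_eq_card, Fintype.card_pi_const, Fintype.card_fun, Fintype.card_fin] at h2
  omega

lemma HQ_pow_le (q n : ℕ) (F : MvPowerSeries σ k) : HQ q (F ^ n) ≤ n * HQ q F := by
  rw [HQ_ker, HQ_ker, TF_pow]
  exact ker_pow_le _ _

lemma HQ_congr (q : ℕ) (F G : MvPowerSeries σ k) (h : F - G ∈ Iq σ k q) : HQ q F = HQ q G := by
  rw [HQ_ker, HQ_ker, TF_eq_of_sub_mem q F G h]

end box
end HKdich

namespace HKdich
set_option linter.unusedSectionVars false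

section auto
variable {σ : Type*} [Fintype σ] [DecidableEq σ] {k : Type*} [Field k]

variable (σ k) in
/-- series of order at least n -/
noncomputable def J (n : ℕ) : Ideal (MvPowerSeries σ k) where
  carrier := {f | ∀ p : σ →₀ ℕ, p.degree < n → coeff p f = 0}
  add_mem' := by
    intro a b ha hb p hp
    rw [map_add, ha p hp, hb p hp, add_zero]
  zero_mem' := by intro p _; simp
  smul_mem' := by
    intro c f hf p hp
    rw [smul_eq_mul, coeff_mul]
    apply Finset.sum_eq_zero
    rintro ⟨x, y⟩ hxy
    rw [Finset.HasAntidiagonal.mem_antidiagonal] at hxy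
    have : y.degree < n := by
      have := congrArg Finsupp.degree hxy
      simp only [map_add] at this
      omega
    simp only
    rw [hf y this, mul_zero]

lemma mem_J {n : ℕ} {f : MvPowerSeries σ k} :
    f ∈ J σ k n ↔ ∀ p : σ →₀ ℕ, p.degree < n → coeff p f = 0 := Iff.rfl

lemma J_mul {a b n : ℕ} {f g : MvPowerSeries σ k} (hf : f ∈ J σ k a) (hg : g ∈ J σ k b)
    (hn : n ≤ a + b) : f * g ∈ J σ k n := by
  intro p hp
  rw [coeff_mul]
  apply Finset.sum_eq_zero
  rintro ⟨x, y⟩ hxy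
  rw [Finset.HasAntidiagonal.mem_antidiagonal] at hxy
  have := congrArg Finsupp.degree hxy
  simp only [map_add] at this
  simp only
  by_cases h : x.degree < a
  · rw [hf x h, zero_mul]
  · rw [hg y (by omega), mul_zero]

lemma J_anti {a b : ℕ} (h : a ≤ b) : J σ k b ≤ J σ k a := fun _ hf p hp => hf p (by omega)

lemma mem_J_zero (f : MvPowerSeries σ k) : f ∈ J σ k 0 := fun p hp => by omega

lemma X_mem_J (i : σ) : (X i : MvPowerSeries σ k) ∈ J σ k 1 := by
  intro p hp
  rw [coeff_X, if_neg]
  rintro rfl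
  simp at hp

lemma J_all {f : MvPowerSeries σ k} (h : ∀ n, f ∈ J σ k n) : f = 0 := by
  ext p; exact h _ p (Nat.lt_succ_self _)

lemma mem_J_one {f : MvPowerSeries σ k} : f ∈ J σ k 1 ↔ constantCoeff f = 0 := by
  constructor
  · intro h
    rw [← coeff_zero_eq_constantCoeff_apply]
    exact h 0 (by simp)
  · intro h p hp
    have : p = 0 := by
      rw [← Finsupp.degree_eq_zero_iff]; omega
    rw [this, coeff_zero_eq_constantCoeff_apply, h]

lemma J_lim (f : ℕ → MvPowerSeries σ k) (h : ∀ N, f (N+1) - f N ∈ J σ k N) :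
    ∃ g : MvPowerSeries σ k, ∀ N, g - f N ∈ J σ k N := by
  have h2 : ∀ N j, f (N + j) - f N ∈ J σ k N := by
    intro N j
    induction j with
    | zero => simp
    | succ j ih =>
      have h3 := J_anti (Nat.le_add_right N j) (h (N + j))
      have := add_mem h3 ih
      simpa [add_assoc] using this
  let g : MvPowerSeries σ k := fun p => coeff p (f (p.degree + 1))
  have hg : ∀ p, coeff p g = coeff p (f (p.degree + 1)) := fun p => rfl
  refine ⟨g, ?_⟩
  intro N p hp
  obtain ⟨j, rfl⟩ : ∃ j, N = p.degree + 1 + j := ⟨N - (p.degree + 1), by omega⟩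
  have h3 := h2 (p.degree + 1) j p (by omega)
  rw [map_sub] at h3 ⊢
  rw [sub_eq_zero] at h3 ⊢
  rw [h3, hg]

/-- shifting down the i-th exponent -/
noncomputable def shiftX (i : σ) (f : MvPowerSeries σ k) : MvPowerSeries σ k :=
  fun p => coeff (p + Finsupp.single i 1) f

lemma shift_decomp (i : σ) (f : MvPowerSeries σ k) :
    f = X i * shiftX i f + resS 1 {i} f := by
  ext p
  rw [map_add, coeff_resS]
  by_cases h : p i = 0
  · have h1 : coeff p (X i * shiftX i f) = 0 := by
      have := (X_pow_dvd_iff (s := i) (n := 1) (φ := X i * shiftX i f)).1 (by simp)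
      exact this p (by omega)
    rw [h1]; simp [h]
  · obtain ⟨p', rfl⟩ : ∃ p', p = Finsupp.single i 1 + p' := by
      refine ⟨p - Finsupp.single i 1, ?_⟩
      rw [add_tsub_cancel_of_le]
      rw [Finsupp.single_le_iff]; omega
    rw [X, coeff_add_monomial_mul]
    simp only [one_mul, Finset.mem_singleton, forall_eq, if_neg (show ¬ ((Finsupp.single i 1 + p' : σ →₀ ℕ) i < 1) by simp)]
    rw [add_zero, add_comm]
    rfl

lemma shift_mem (i : σ) {n : ℕ} {f : MvPowerSeries σ k} (hf : f ∈ J σ k n) :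
    shiftX i f ∈ J σ k (n - 1) := by
  intro p hp
  refine hf (p + Finsupp.single i 1) ?_
  rw [map_add, Finsupp.degree_single]; omega

lemma decomp (S : Finset σ) (n : ℕ) (f : MvPowerSeries σ k) (hf : f ∈ J σ k n) :
    ∃ (a : σ → MvPowerSeries σ k), f = ∑ j ∈ S, X j * a j + resS 1 S f ∧
      (∀ j, a j ∈ J σ k (n - 1)) := by
  induction S using Finset.induction_on with
  | empty =>
    refine ⟨0, ?_, fun j => zero_mem _⟩
    ext p
    simp [coeff_resS]
  | insert i S hi ih =>
    obtain ⟨a, h1, h2⟩ := ih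
    refine ⟨Function.update a i (shiftX i (resS 1 S f)), ?_, ?_⟩
    · rw [Finset.sum_insert hi]
      have h3 : ∑ j ∈ S, X j * Function.update a i (shiftX i (resS 1 S f)) j = ∑ j ∈ S, X j * a j := by
        apply Finset.sum_congr rfl
        intro j hj
        rw [Function.update_of_ne]
        rintro rfl; exact hi hj
      have h4 : resS 1 (insert i S) f = resS 1 {i} (resS 1 S f) := by
        ext p
        simp only [coeff_resS, Finset.mem_insert, forall_eq_or_imp, Finset.mem_singleton, forall_eq]
        by_cases h : p i < 1 <;> simp [h]
      rw [h3, h4, Function.update_self]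
      conv_lhs => rw [h1, shift_decomp i (resS 1 S f)]
      ring
    · intro j
      by_cases h : j = i
      · subst h
        rw [Function.update_self]
        apply shift_mem
        intro p hp
        rw [coeff_resS, hf p hp]; simp
      · rw [Function.update_of_ne h]; exact h2 j

lemma resS_mem (S : Finset σ) (q : ℕ) {n : ℕ} {f : MvPowerSeries σ k} (hf : f ∈ J σ k n) :
    resS q S f ∈ J σ k n := by
  intro p hp
  rw [coeff_resS, hf p hp]; simp

lemma decomp_univ (n : ℕ) (f : MvPowerSeries σ k) (hf : f ∈ J σ k (n + 1)) :
    ∃ (a : σ → MvPowerSeries σ k), f = ∑ j, X j * a j ∧ (∀ j, a j ∈ J σ k n) := by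
  obtain ⟨a, h1, h2⟩ := decomp Finset.univ (n + 1) f hf
  refine ⟨a, ?_, h2⟩
  have : resS 1 Finset.univ f = 0 := by
    ext p
    rw [coeff_resS]
    split_ifs with h
    · have : p = 0 := by ext i; have := h i (Finset.mem_univ _); simpa using this
      rw [this]
      exact hf 0 (by simp)
    · simp
  rw [this, add_zero] at h1
  exact h1

lemma algHom_J (φ : MvPowerSeries σ k →ₐ[k] MvPowerSeries σ k) (h : ∀ i, φ (X i) ∈ J σ k 1)
    (n : ℕ) : ∀ f ∈ J σ k n, φ f ∈ J σ k n := by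
  induction n with
  | zero => intro f _; exact mem_J_zero _
  | succ n ih =>
    intro f hf
    obtain ⟨a, rfl, ha⟩ := decomp_univ n f hf
    rw [map_sum]
    apply sum_mem
    intro j _
    rw [map_mul]
    exact J_mul (h j) (ih _ (ha j)) (by omega)

lemma algHom_sub (φ : MvPowerSeries σ k →ₐ[k] MvPowerSeries σ k)
    (h : ∀ i, φ (X i) - X i ∈ J σ k 2)
    (n : ℕ) : ∀ f ∈ J σ k n, φ f - f ∈ J σ k (n + 1) := by
  have h1 : ∀ i, φ (X i) ∈ J σ k 1 := by
    intro i
    have := add_mem (J_anti (by omega : 1 ≤ 2) (h i)) (X_mem_J (k := k) i)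
    simpa using this
  induction n with
  | zero =>
    intro f _
    have hg : f - C (constantCoeff f) ∈ J σ k 1 := by rw [mem_J_one]; simp
    have h2 := sub_mem (algHom_J φ h1 1 _ hg) hg
    have h3 : φ (C (constantCoeff f)) = C (constantCoeff f) := φ.commutes _
    rw [map_sub, h3] at h2
    simpa using h2
  | succ n ih =>
    intro f hf
    obtain ⟨a, rfl, ha⟩ := decomp_univ n f hf
    rw [map_sum, ← Finset.sum_sub_distrib]
    apply sum_mem
    intro j _
    have : φ (X j * a j) - X j * a j = φ (X j) * (φ (a j) - a j) + (φ (X j) - X j) * a j := by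
      rw [map_mul]; ring
    rw [this]
    exact add_mem (J_mul (h1 j) (ih _ (ha j)) (by omega)) (J_mul (h j) (ha j) (by omega))

lemma algHom_bij (φ : MvPowerSeries σ k →ₐ[k] MvPowerSeries σ k)
    (h : ∀ i, φ (X i) - X i ∈ J σ k 2) : Function.Bijective φ := by
  constructor
  · rw [injective_iff_map_eq_zero]
    intro f hf
    apply J_all
    intro n
    induction n with
    | zero => exact mem_J_zero _
    | succ n ih =>
      have := algHom_sub φ h n f ih
      rw [hf, zero_sub, neg_mem_iff] at this
      exact this
  · intro g
    let s : ℕ → MvPowerSeries σ k := fun n => Nat.rec 0 (fun _ f => f + (g - φ f)) n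
    have hs : ∀ n, s (n+1) = s n + (g - φ (s n)) := fun n => rfl
    have h1 : ∀ n, g - φ (s n) ∈ J σ k n := by
      intro n
      induction n with
      | zero => exact mem_J_zero _
      | succ n ih =>
        have := algHom_sub φ h n _ ih
        rw [hs, map_add]
        rw [← neg_mem_iff]
        convert this using 1
        ring
    obtain ⟨f, hf⟩ := J_lim s (by intro N; rw [hs]; simpa using h1 N)
    refine ⟨f, ?_⟩
    rw [← sub_eq_zero]
    apply J_all
    intro n
    have hX : ∀ i, φ (X i) ∈ J σ k 1 := by
      intro i
      have := add_mem (J_anti (by omega : 1 ≤ 2) (h i)) (X_mem_J (k := k) i)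
      simpa using this
    have h2 := algHom_J φ hX n _ (hf n)
    have h3 := sub_mem h2 (h1 n)
    rw [map_sub] at h3
    simpa using h3

lemma exists_sub (ξ : σ → MvPowerSeries σ k) (h : ∀ i, ξ i ∈ J σ k 1) :
    ∃ φ : MvPowerSeries σ k →ₐ[k] MvPowerSeries σ k, ∀ i, φ (X i) = ξ i := by
  have hs : HasSubst ξ := hasSubst_of_constantCoeff_zero (fun i => mem_J_one.1 (h i))
  exact ⟨substAlgHom hs, fun i => substAlgHom_X hs i⟩

def Rel (F G : MvPowerSeries σ k) : Prop :=
  ∃ Φ : MvPowerSeries σ k ≃ₐ[k] MvPowerSeries σ k, ∃ u, IsUnit u ∧ Φ F = u * G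

lemma Rel.trans {F G H : MvPowerSeries σ k} (h1 : Rel F G) (h2 : Rel G H) : Rel F H := by
  obtain ⟨Φ, u, hu, h⟩ := h1
  obtain ⟨Ψ, v, hv, h'⟩ := h2
  refine ⟨Φ.trans Ψ, Ψ u * v, (hu.map Ψ).mul hv, ?_⟩
  rw [AlgEquiv.trans_apply, h, map_mul, h', mul_assoc]

lemma Rel.symm {F G : MvPowerSeries σ k} (h1 : Rel F G) : Rel G F := by
  obtain ⟨Φ, u, hu, h⟩ := h1
  obtain ⟨u, rfl⟩ := hu
  refine ⟨Φ.symm, Φ.symm ((u⁻¹ : (MvPowerSeries σ k)ˣ) : MvPowerSeries σ k), (Units.isUnit _).map _, ?_⟩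
  have h2 : F = Φ.symm (u * G) := by rw [← h, AlgEquiv.symm_apply_apply]
  conv_rhs => rw [h2]
  rw [← map_mul, ← mul_assoc, Units.inv_mul, one_mul]

/-- two substitutions that are inverse to each other modulo J 2 -/
lemma exists_equiv (ξ ζ : σ → MvPowerSeries σ k) (φ ψ : MvPowerSeries σ k →ₐ[k] MvPowerSeries σ k)
    (hφ : ∀ i, φ (X i) = ξ i) (hψ : ∀ i, ψ (X i) = ζ i)
    (h1 : ∀ i, φ (ζ i) - X i ∈ J σ k 2) (h2 : ∀ i, ψ (ξ i) - X i ∈ J σ k 2) :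
    ∃ Φ : MvPowerSeries σ k ≃ₐ[k] MvPowerSeries σ k, ∀ f, Φ f = φ f := by
  have b1 : Function.Bijective (φ.comp ψ) := algHom_bij _ (by
    intro i; rw [AlgHom.comp_apply, hψ]; exact h1 i)
  have b2 : Function.Bijective (ψ.comp φ) := algHom_bij _ (by
    intro i; rw [AlgHom.comp_apply, hφ]; exact h2 i)
  have hb : Function.Bijective φ := by
    constructor
    · have := b2.1; rw [AlgHom.coe_comp] at this; exact this.of_comp
    · have := b1.2; rw [AlgHom.coe_comp] at this; exact this.of_comp
  exact ⟨AlgEquiv.ofBijective φ hb, fun f => rfl⟩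

lemma Rel.quot {F G : MvPowerSeries σ k} (h : Rel F G) :
    Nonempty ((MvPowerSeries σ k ⧸ (Ideal.span {F} : Ideal (MvPowerSeries σ k))) ≃+*
      (MvPowerSeries σ k ⧸ (Ideal.span {G} : Ideal (MvPowerSeries σ k)))) := by
  obtain ⟨Φ, u, hu, h⟩ := h
  refine ⟨Ideal.quotientEquiv _ _ (Φ : MvPowerSeries σ k ≃+* MvPowerSeries σ k) ?_⟩
  rw [Ideal.map_span, Set.image_singleton]
  have : ((Φ : MvPowerSeries σ k ≃+* MvPowerSeries σ k) : MvPowerSeries σ k →+* MvPowerSeries σ k) F = u * G := h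
  rw [this, Ideal.span_singleton_mul_left_unit hu]

lemma map_Iq_le [CharP k 2] (Φ : MvPowerSeries σ k ≃ₐ[k] MvPowerSeries σ k) (e : ℕ) :
    Ideal.map (Φ : MvPowerSeries σ k →+* MvPowerSeries σ k) (Iq σ k (2^e)) ≤ Iq σ k (2 ^ e) := by
  have : CharP (MvPowerSeries σ k) 2 := charP_of_injective_ringHom (f := (C : k →+* MvPowerSeries σ k)) (C_injective) 2
  have : ExpChar (MvPowerSeries σ k) 2 := ExpChar.prime Nat.prime_two
  rw [Iq, Ideal.map_span, Ideal.span_le]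
  rintro _ ⟨_, ⟨i, rfl⟩, rfl⟩
  have h1 : Φ (X i) ∈ J σ k 1 := by
    rw [mem_J_one]
    by_contra hc
    have : IsUnit (Φ (X i)) := by rw [isUnit_iff_constantCoeff]; exact isUnit_iff_ne_zero.2 hc
    have h2 : IsUnit (X i : MvPowerSeries σ k) := by
      have := this.map Φ.symm
      rwa [AlgEquiv.symm_apply_apply] at this
    rw [isUnit_iff_constantCoeff, constantCoeff_X] at h2
    simp at h2
  obtain ⟨a, ha, -⟩ := decomp_univ 0 _ h1
  simp only [map_pow, SetLike.mem_coe]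
  have : (Φ : MvPowerSeries σ k →+* MvPowerSeries σ k) (X i) = ∑ j, X j * a j := ha
  rw [this, sum_pow_char_pow]
  apply sum_mem
  intro j _
  rw [mul_pow]
  exact Ideal.mul_mem_right _ _ (Ideal.subset_span ⟨j, rfl⟩)

lemma Rel.HQ_eq [CharP k 2] {F G : MvPowerSeries σ k} (h : Rel F G) (e : ℕ) :
    HQ (2^e) F = HQ (2^e) G := by
  obtain ⟨Φ, u, hu, h⟩ := h
  apply LinearEquiv.finrank_eq
  refine (Ideal.quotientEquivAlg _ _ Φ ?_).toLinearEquiv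
  rw [Ideal.span_union, Ideal.span_union, Ideal.map_sup]
  congr 1
  · rw [Ideal.map_span, Set.image_singleton]
    have : (Φ : MvPowerSeries σ k →+* MvPowerSeries σ k) F = u * G := h
    rw [this, Ideal.span_singleton_mul_left_unit hu]
  · apply le_antisymm
    · have := map_Iq_le Φ.symm e
      have h2 := Ideal.map_mono (f := (Φ : MvPowerSeries σ k →+* MvPowerSeries σ k)) this
      rw [Ideal.map_map] at h2
      have h3 : (Φ : MvPowerSeries σ k →+* MvPowerSeries σ k).comp (Φ.symm : MvPowerSeries σ k →+* MvPowerSeries σ k) = RingHom.id _ := by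
        apply RingHom.ext; intro x
        exact Φ.apply_symm_apply x
      rw [h3, Ideal.map_id] at h2
      exact h2
    · exact map_Iq_le Φ e

end auto
end HKdich

namespace HKdich
set_option linter.unusedSectionVars false

section split
variable {σ : Type*} [Fintype σ] [DecidableEq σ] {k : Type*} [Field k]

def Free (S : Finset σ) (f : MvPowerSeries σ k) : Prop :=
  ∀ p : σ →₀ ℕ, ∀ j ∈ S, p j ≠ 0 → coeff p f = 0

lemma Free.add {S : Finset σ} {f g : MvPowerSeries σ k} (hf : Free S f) (hg : Free S g) :
    Free S (f + g) := by
  intro p j hj hp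
  rw [map_add, hf p j hj hp, hg p j hj hp, add_zero]

lemma free_resS (S : Finset σ) (f : MvPowerSeries σ k) : Free S (resS 1 S f) := by
  intro p j hj hp
  rw [coeff_resS, if_neg]
  intro h
  have := h j hj
  omega

lemma Free.shift {S : Finset σ} {f : MvPowerSeries σ k} (hf : Free S f) (i : σ) :
    Free S (shiftX i f) := by
  intro p j hj hp
  exact hf (p + Finsupp.single i 1) j hj (by simp [hp])

lemma Free.resS {S : Finset σ} {f : MvPowerSeries σ k} (hf : Free S f) (q : ℕ) (T : Finset σ) :
    Free S (resS q T f) := by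
  intro p j hj hp
  rw [coeff_resS, hf p j hj hp]; simp

lemma free_decomp (S T : Finset σ) (f : MvPowerSeries σ k) (hf : Free S f) :
    ∃ (a : σ → MvPowerSeries σ k), f = ∑ j ∈ T, X j * a j + HKdich.resS 1 T f ∧
      (∀ j, Free S (a j)) := by
  induction T using Finset.induction_on with
  | empty =>
    refine ⟨0, ?_, fun j p _ _ _ => by simp⟩
    ext p
    simp [coeff_resS]
  | insert i T hi ih =>
    obtain ⟨a, h1, h2⟩ := ih
    refine ⟨Function.update a i (shiftX i (HKdich.resS 1 T f)), ?_, ?_⟩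
    · rw [Finset.sum_insert hi]
      have h3 : ∑ j ∈ T, X j * Function.update a i (shiftX i (HKdich.resS 1 T f)) j = ∑ j ∈ T, X j * a j := by
        apply Finset.sum_congr rfl
        intro j hj
        rw [Function.update_of_ne]
        rintro rfl; exact hi hj
      have h4 : HKdich.resS 1 (insert i T) f = HKdich.resS 1 {i} (HKdich.resS 1 T f) := by
        ext p
        simp only [coeff_resS, Finset.mem_insert, forall_eq_or_imp, Finset.mem_singleton, forall_eq]
        by_cases h : p i < 1 <;> simp [h]
      rw [h3, h4, Function.update_self]
      conv_lhs => rw [h1, shift_decomp i (HKdich.resS 1 T f)]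
      ring
    · intro j
      by_cases h : j = i
      · subst h
        rw [Function.update_self]
        exact (hf.resS _ _).shift _
      · rw [Function.update_of_ne h]; exact h2 j

lemma free_fixed (S : Finset σ) (φ : MvPowerSeries σ k →ₐ[k] MvPowerSeries σ k)
    (h : ∀ j ∉ S, φ (X j) = X j) (f : MvPowerSeries σ k) (hf : Free S f) : φ f = f := by
  have key : ∀ n, ∀ f : MvPowerSeries σ k, Free S f → φ f - f ∈ J σ k n := by
    intro n
    induction n with
    | zero => intro f _; exact mem_J_zero _
    | succ n ih =>
      intro f hf
      obtain ⟨a, h1, h2⟩ := free_decomp S Sᶜ f hf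
      have hc : HKdich.resS 1 Sᶜ f = C (constantCoeff f) := by
        ext p
        rw [coeff_resS, coeff_C]
        by_cases hp : p = 0
        · subst hp; simp
        · rw [if_neg hp]
          split_ifs with h'
          · obtain ⟨j, hj⟩ := Finsupp.ne_iff.1 hp
            by_cases hjS : j ∈ S
            · exact hf p j hjS hj
            · have := h' j (by simpa using hjS)
              simp at hj; omega
          · rfl
      rw [hc] at h1
      have h3 : φ (C (constantCoeff f)) = C (constantCoeff f) := φ.commutes _
      have h4 : φ f - f = ∑ j ∈ Sᶜ, X j * (φ (a j) - a j) := by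
        conv_lhs => rw [h1]
        rw [map_add, h3, add_sub_add_right_eq_sub, map_sum, ← Finset.sum_sub_distrib]
        apply Finset.sum_congr rfl
        intro j hj
        rw [map_mul, h j (by simpa using hj), mul_sub]
      rw [h4]
      apply sum_mem
      intro j _
      exact J_mul (X_mem_J j) (ih _ (h2 j)) (by omega)
  rw [← sub_eq_zero]
  exact J_all (fun n => key n f hf)

variable {ι : Type*} [Fintype ι] [DecidableEq ι]

/-- the variables in pairs -/
def pairS (α β : ι → σ) : Finset σ := Finset.univ.image α ∪ Finset.univ.image β

lemma mem_pairS {α β : ι → σ} {j : σ} : j ∈ pairS α β ↔ (∃ i, α i = j) ∨ (∃ i, β i = j) := by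
  simp [pairS]

variable (k) in
noncomputable def hyp (α β : ι → σ) : MvPowerSeries σ k := ∑ i, X (α i) * X (β i)

lemma sum_pairS {M : Type*} [AddCommMonoid M] {α β : ι → σ} (hα : Function.Injective α)
    (hβ : Function.Injective β) (hαβ : ∀ i j, α i ≠ β j) (g : σ → M) :
    ∑ j ∈ pairS α β, g j = ∑ i, (g (α i) + g (β i)) := by
  rw [pairS, Finset.sum_union, Finset.sum_image (fun _ _ _ _ h => hα h),
    Finset.sum_image (fun _ _ _ _ h => hβ h), Finset.sum_add_distrib]
  rw [Finset.disjoint_left]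
  intro x hx hy
  simp only [Finset.mem_image, Finset.mem_univ, true_and] at hx hy
  obtain ⟨i, rfl⟩ := hx
  obtain ⟨j, hj⟩ := hy
  exact hαβ i j hj.symm

/-- family equal to u on α, v on β and X elsewhere -/
lemma exists_pair_fun {α β : ι → σ} (hα : Function.Injective α)
    (hβ : Function.Injective β) (hαβ : ∀ i j, α i ≠ β j) (u v : ι → MvPowerSeries σ k) :
    ∃ ξ : σ → MvPowerSeries σ k, (∀ i, ξ (α i) = u i) ∧ (∀ i, ξ (β i) = v i) ∧
      ∀ j ∉ pairS α β, ξ j = X j := by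
  refine ⟨fun j => X j + ∑ i, (if j = α i then u i - X (α i) else 0) +
    ∑ i, (if j = β i then v i - X (β i) else 0), ?_, ?_, ?_⟩
  · intro i
    simp [hα.eq_iff, hαβ]
  · intro i
    have : ∀ i j, β i ≠ α j := fun i j h => hαβ j i h.symm
    simp [hβ.eq_iff, this]
  · intro j hj
    rw [mem_pairS] at hj
    push Not at hj
    have h1 : ∀ i, j ≠ α i := fun i h => hj.1 i h.symm
    have h2 : ∀ i, j ≠ β i := fun i h => hj.2 i h.symm
    simp [h1, h2]

lemma split_step {α β : ι → σ} (hα : Function.Injective α)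
    (hβ : Function.Injective β) (hαβ : ∀ i j, α i ≠ β j) (F : MvPowerSeries σ k)
    (n : ℕ) (hn : 3 ≤ n) (u v : ι → MvPowerSeries σ k) (c : MvPowerSeries σ k)
    (hu : ∀ i, u i - X (α i) ∈ J σ k 2) (hv : ∀ i, v i - X (β i) ∈ J σ k 2)
    (hc : Free (pairS α β) c) (hF : F - ∑ i, u i * v i - c ∈ J σ k n) :
    ∃ (u' v' : ι → MvPowerSeries σ k) (c' : MvPowerSeries σ k),
      (∀ i, u' i - X (α i) ∈ J σ k 2) ∧ (∀ i, v' i - X (β i) ∈ J σ k 2) ∧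
      Free (pairS α β) c' ∧ F - ∑ i, u' i * v' i - c' ∈ J σ k (n + 1) ∧
      (∀ i, u' i - u i ∈ J σ k (n - 1)) ∧ (∀ i, v' i - v i ∈ J σ k (n - 1)) ∧
      c' - c ∈ J σ k n := by
  obtain ⟨a, h1, h2⟩ := decomp (pairS α β) n _ hF
  set E := F - ∑ i, u i * v i - c with hE
  rw [sum_pairS hα hβ hαβ] at h1
  have h2' : ∀ j, a j ∈ J σ k 2 := fun j => J_anti (by omega) (h2 j)
  refine ⟨fun i => u i + a (β i), fun i => v i + a (α i), c + resS 1 (pairS α β) E,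
    ?_, ?_, hc.add (free_resS _ _), ?_, ?_, ?_, ?_⟩
  · intro i
    have := add_mem (hu i) (h2' (β i))
    convert this using 1; ring
  · intro i
    have := add_mem (hv i) (h2' (α i))
    convert this using 1; ring
  · have : F - ∑ i, (u i + a (β i)) * (v i + a (α i)) - (c + resS 1 (pairS α β) E) =
        - ∑ i, ((u i - X (α i)) * a (α i) + (v i - X (β i)) * a (β i) + a (α i) * a (β i)) := by
      have h5 : ∑ i, (u i + a (β i)) * (v i + a (α i)) = ∑ i, u i * v i +
          ∑ i, ((u i - X (α i)) * a (α i) + (v i - X (β i)) * a (β i) + a (α i) * a (β i)) +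
          ∑ i, (X (α i) * a (α i) + X (β i) * a (β i)) := by
        rw [← Finset.sum_add_distrib, ← Finset.sum_add_distrib]
        apply Finset.sum_congr rfl
        intro i _; ring
      have h6 : F = E + ∑ i, u i * v i + c := by rw [hE]; ring
      rw [h5]
      linear_combination h6 + h1
    rw [this, neg_mem_iff]
    apply sum_mem
    intro i _
    refine add_mem (add_mem ?_ ?_) ?_
    · exact J_mul (hu i) (h2 _) (by omega)
    · exact J_mul (hv i) (h2 _) (by omega)
    · exact J_mul (h2 _) (h2 _) (by omega)
  · intro i; simpa using h2 (β i)
  · intro i; simpa using h2 (α i)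
  · simpa using resS_mem _ _ hF

lemma split_lemma {α β : ι → σ} (hα : Function.Injective α)
    (hβ : Function.Injective β) (hαβ : ∀ i j, α i ≠ β j) (F c0 : MvPowerSeries σ k)
    (hc0 : Free (pairS α β) c0) (hF : F - hyp k α β - c0 ∈ J σ k 3) :
    ∃ (u v : ι → MvPowerSeries σ k) (c : MvPowerSeries σ k),
      (∀ i, u i - X (α i) ∈ J σ k 2) ∧ (∀ i, v i - X (β i) ∈ J σ k 2) ∧
      Free (pairS α β) c ∧ F = ∑ i, u i * v i + c ∧ c - c0 ∈ J σ k 3 := by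
  let St := (ι → MvPowerSeries σ k) × (ι → MvPowerSeries σ k) × MvPowerSeries σ k
  let P : ℕ → St → Prop := fun N s =>
    (∀ i, s.1 i - X (α i) ∈ J σ k 2) ∧ (∀ i, s.2.1 i - X (β i) ∈ J σ k 2) ∧
      Free (pairS α β) s.2.2 ∧ F - ∑ i, s.1 i * s.2.1 i - s.2.2 ∈ J σ k (N + 3)
  have hstep : ∀ N (s : {s // P N s}), ∃ s' : {s // P (N+1) s},
      (∀ i, s'.1.1 i - s.1.1 i ∈ J σ k N) ∧ (∀ i, s'.1.2.1 i - s.1.2.1 i ∈ J σ k N) ∧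
      s'.1.2.2 - s.1.2.2 ∈ J σ k N ∧ s'.1.2.2 - s.1.2.2 ∈ J σ k 3 := by
    rintro N ⟨⟨u, v, c⟩, h1, h2, h3, h4⟩
    obtain ⟨u', v', c', g1, g2, g3, g4, g5, g6, g7⟩ :=
      split_step hα hβ hαβ F (N + 3) (by omega) u v c h1 h2 h3 h4
    exact ⟨⟨(u', v', c'), g1, g2, g3, g4⟩, fun i => J_anti (by omega) (g5 i),
      fun i => J_anti (by omega) (g6 i), J_anti (by omega) g7, J_anti (by omega) g7⟩
  choose nx hnx using hstep
  have h0 : P 0 (fun i => X (α i), fun i => X (β i), c0) := by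
    refine ⟨fun i => by simp, fun i => by simp, hc0, ?_⟩
    exact hF
  let s : (N : ℕ) → {s // P N s} := fun N => Nat.rec ⟨_, h0⟩ (fun N s => nx N s) N
  have hs : ∀ N, s (N+1) = nx N (s N) := fun N => rfl
  have hu : ∀ i, ∃ g, ∀ N, g - (s N).1.1 i ∈ J σ k N := fun i =>
    J_lim _ (fun N => by rw [hs]; exact (hnx N (s N)).1 i)
  have hv : ∀ i, ∃ g, ∀ N, g - (s N).1.2.1 i ∈ J σ k N := fun i =>
    J_lim _ (fun N => by rw [hs]; exact (hnx N (s N)).2.1 i)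
  obtain ⟨c, hc⟩ : ∃ g, ∀ N, g - (s N).1.2.2 ∈ J σ k N :=
    J_lim _ (fun N => by rw [hs]; exact (hnx N (s N)).2.2.1)
  choose u hu using hu
  choose v hv using hv
  refine ⟨u, v, c, ?_, ?_, ?_, ?_, ?_⟩
  · intro i
    have := add_mem (hu i 2) ((s 2).2.1 i)
    simpa using this
  · intro i
    have := add_mem (hv i 2) ((s 2).2.2.1 i)
    simpa using this
  · intro p j hj hp
    have h1 := hc (p.degree + 1) p (by omega)
    have h2 := (s (p.degree + 1)).2.2.2.1 p j hj hp
    rw [map_sub, h2, sub_zero] at h1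
    exact h1
  · rw [← sub_eq_zero]
    apply J_all
    intro N
    have h1 := J_anti (by omega : N ≤ N + 3) (s N).2.2.2.2
    have h2 : ∑ i, (u i * v i - (s N).1.1 i * (s N).1.2.1 i) ∈ J σ k N := by
      apply sum_mem
      intro i _
      have : u i * v i - (s N).1.1 i * (s N).1.2.1 i =
        (u i - (s N).1.1 i) * v i + (s N).1.1 i * (v i - (s N).1.2.1 i) := by ring
      rw [this]
      exact add_mem (Ideal.mul_mem_right _ _ (hu i N)) (Ideal.mul_mem_left _ _ (hv i N))
    rw [Finset.sum_sub_distrib] at h2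
    have := sub_mem (sub_mem h1 h2) (hc N)
    convert this using 1
    ring
  · have h3 : ∀ N, (s N).1.2.2 - c0 ∈ J σ k 3 := by
      intro N
      induction N with
      | zero => have : (s 0).1.2.2 = c0 := rfl
                rw [this]; simp
      | succ N ih =>
        have := add_mem (hnx N (s N)).2.2.2 ih
        rw [← hs] at this
        simpa using this
    have := add_mem (hc 3) (h3 3)
    simpa using this

lemma split_rel {α β : ι → σ} (hα : Function.Injective α)
    (hβ : Function.Injective β) (hαβ : ∀ i j, α i ≠ β j) (F c0 : MvPowerSeries σ k)
    (hc0 : Free (pairS α β) c0) (hF : F - hyp k α β - c0 ∈ J σ k 3) :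
    ∃ c : MvPowerSeries σ k, Free (pairS α β) c ∧ c - c0 ∈ J σ k 3 ∧ Rel F (hyp k α β + c) := by
  obtain ⟨u, v, c, hu, hv, hc, hFe, hcc⟩ := split_lemma hα hβ hαβ F c0 hc0 hF
  refine ⟨c, hc, hcc, Rel.symm ?_⟩
  obtain ⟨ξ, h1, h2, h3⟩ := exists_pair_fun hα hβ hαβ u v
  have hξ : ∀ j, ξ j - X j ∈ J σ k 2 := by
    intro j
    by_cases hj : j ∈ pairS α β
    · rw [mem_pairS] at hj
      rcases hj with ⟨i, rfl⟩ | ⟨i, rfl⟩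
      · rw [h1]; exact hu i
      · rw [h2]; exact hv i
    · rw [h3 j hj]; simp
  obtain ⟨φ, hφ⟩ := exists_sub ξ (fun j => by
    have := add_mem (J_anti (by omega : 1 ≤ 2) (hξ j)) (X_mem_J (k := k) j)
    simpa using this)
  refine ⟨AlgEquiv.ofBijective φ (algHom_bij φ (fun i => by rw [hφ]; exact hξ i)), 1, isUnit_one, ?_⟩
  rw [one_mul, AlgEquiv.coe_ofBijective, map_add, free_fixed (pairS α β) φ
    (fun j hj => by rw [hφ, h3 j hj]) c hc, hFe, hyp, map_sum]
  congr 1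
  apply Finset.sum_congr rfl
  intro i _
  rw [map_mul, hφ, hφ, h1, h2]

/-- rescaling by a unit -/
lemma scale_rel {α β : ι → σ} (hα : Function.Injective α)
    (hβ : Function.Injective β) (hαβ : ∀ i j, α i ≠ β j) (c w : MvPowerSeries σ k)
    (hc : Free (pairS α β) c) (hw : IsUnit w) :
    Rel (hyp k α β + c * w) (hyp k α β + c) := by
  apply Rel.symm
  obtain ⟨w, rfl⟩ := hw
  set w' : MvPowerSeries σ k := ((w⁻¹ : (MvPowerSeries σ k)ˣ) : MvPowerSeries σ k) with hw'
  have hww : (w : MvPowerSeries σ k) * w' = 1 := Units.mul_inv w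
  set a := constantCoeff w' with ha
  have ha0 : a ≠ 0 := by
    intro h0
    have := congrArg constantCoeff hww
    rw [map_mul, ← ha, h0] at this
    simp at this
  obtain ⟨ξ, h1, h2, h3⟩ := exists_pair_fun hα hβ hαβ (fun i => w' * X (α i)) (fun i => X (β i))
  obtain ⟨ζ, g1, g2, g3⟩ := exists_pair_fun hα hβ hαβ (fun i => C a⁻¹ * X (α i)) (fun i => (X (β i) : MvPowerSeries σ k))
  have hcases : ∀ j, (∃ i, α i = j) ∨ (ξ j = X j ∧ ζ j = X j) := by
    intro j
    by_cases hj : j ∈ pairS α β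
    · rcases mem_pairS.1 hj with h | ⟨i, rfl⟩
      · exact Or.inl h
      · exact Or.inr ⟨h2 i, g2 i⟩
    · exact Or.inr ⟨h3 j hj, g3 j hj⟩
  have m1 : ∀ j, ξ j ∈ J σ k 1 := by
    intro j
    rcases hcases j with ⟨i, rfl⟩ | h
    · rw [h1]; exact Ideal.mul_mem_left _ _ (X_mem_J _)
    · rw [h.1]; exact X_mem_J _
  have m2 : ∀ j, ζ j ∈ J σ k 1 := by
    intro j
    rcases hcases j with ⟨i, rfl⟩ | h
    · rw [g1]; exact Ideal.mul_mem_left _ _ (X_mem_J _)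
    · rw [h.2]; exact X_mem_J _
  obtain ⟨φ, hφ⟩ := exists_sub ξ m1
  obtain ⟨ψ, hψ⟩ := exists_sub ζ m2
  have hφC : ∀ x, φ (C x) = C x := fun x => φ.commutes x
  have hψC : ∀ x, ψ (C x) = C x := fun x => ψ.commutes x
  have haw : w' - C a ∈ J σ k 1 := by rw [mem_J_one]; simp [ha]
  have hCa : (C a⁻¹ : MvPowerSeries σ k) * C a = 1 := by
    rw [← map_mul, inv_mul_cancel₀ ha0, map_one]
  obtain ⟨Φ, hΦ⟩ := exists_equiv ξ ζ φ ψ hφ hψ (by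
    intro j
    rcases hcases j with ⟨i, rfl⟩ | h
    · rw [g1, map_mul, hφC, hφ, h1]
      have : C a⁻¹ * (w' * X (α i)) - X (α i) = C a⁻¹ * ((w' - C a) * X (α i)) := by
        linear_combination (X (α i)) * hCa
      rw [this]
      exact Ideal.mul_mem_left _ _ (J_mul haw (X_mem_J _) (by omega))
    · rw [h.2, hφ, h.1]; simp) (by
    intro j
    rcases hcases j with ⟨i, rfl⟩ | h
    · rw [h1, map_mul, hψ, g1]
      have h5 := algHom_J ψ (fun j => by rw [hψ]; exact m2 j) 1 _ haw
      rw [map_sub, hψC] at h5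
      have : ψ w' * (C a⁻¹ * X (α i)) - X (α i) = C a⁻¹ * ((ψ w' - C a) * X (α i)) := by
        linear_combination (X (α i)) * hCa
      rw [this]
      exact Ideal.mul_mem_left _ _ (J_mul h5 (X_mem_J _) (by omega))
    · rw [h.1, hψ, h.2]; simp)
  refine ⟨Φ, w', Units.isUnit _, ?_⟩
  rw [hΦ, map_add, free_fixed (pairS α β) φ (fun j hj => by rw [hφ, h3 j hj]) c hc]
  have : φ (hyp k α β) = w' * hyp k α β := by
    rw [hyp, map_sum, Finset.mul_sum]
    apply Finset.sum_congr rfl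
    intro i _
    rw [map_mul, hφ, hφ, h1, h2]; ring
  rw [this]
  linear_combination (-c) * hww

lemma lin_equiv (M : Matrix σ σ k) (hM : IsUnit M.det) :
    ∃ Φ : MvPowerSeries σ k ≃ₐ[k] MvPowerSeries σ k, ∀ i, Φ (X i) = ∑ a, M i a • X a := by
  have hm : ∀ (M : Matrix σ σ k) i, (∑ a, M i a • X a : MvPowerSeries σ k) ∈ J σ k 1 := by
    intro M i
    apply sum_mem
    intro a _
    rw [smul_eq_C_mul]
    exact Ideal.mul_mem_left _ _ (X_mem_J _)
  obtain ⟨φ, hφ⟩ := exists_sub _ (hm M)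
  obtain ⟨ψ, hψ⟩ := exists_sub _ (hm M⁻¹)
  have key : ∀ (M N : Matrix σ σ k), M * N = 1 → ∀ i,
      (∑ a, M i a • (∑ b, N a b • X b : MvPowerSeries σ k)) - X i ∈ J σ k 2 := by
    intro M N h i
    have : (∑ a, M i a • (∑ b, N a b • X b : MvPowerSeries σ k)) = X i := by
      simp_rw [Finset.smul_sum, smul_smul]
      rw [Finset.sum_comm]
      simp_rw [← Finset.sum_smul, ← Matrix.mul_apply, h, Matrix.one_apply]
      simp
    rw [this]; simp
  obtain ⟨Φ, hΦ⟩ := exists_equiv _ _ φ ψ hφ hψ (by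
    intro i
    simp only [map_sum, map_smul, hφ]
    exact key _ _ (Matrix.nonsing_inv_mul _ hM) i) (by
    intro i
    simp only [map_sum, map_smul, hψ]
    exact key _ _ (Matrix.mul_nonsing_inv _ hM) i)
  exact ⟨Φ, fun i => by rw [hΦ, hφ]⟩

end split
end HKdich

namespace HKdich
set_option linter.unusedSectionVars false

section qnf
variable {k : Type*} [Field k] {V : Type*} [AddCommGroup V] [Module k V] [FiniteDimensional k V]

lemma exists_li (W : Submodule k V) (n : ℕ) (h : n ≤ Module.finrank k W) :
    ∃ b : Fin n → V, LinearIndependent k b ∧ ∀ i, b i ∈ W := by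
  have h1 := (Module.finBasis k W).linearIndependent
  have h2 := h1.map' W.subtype (Submodule.ker_subtype W)
  have h3 := h2.comp (Fin.castLE h) (Fin.castLE_injective h)
  exact ⟨_, h3, fun i => by simp⟩

lemma polar_add (B : LinearMap.BilinForm k V) (u v : V) :
    B (u + v) (u + v) = B u u + B v v + (B u v + B v u) := by
  simp only [map_add, LinearMap.add_apply]; ring

theorem qnf [IsAlgClosed k] [CharP k 2] (B : LinearMap.BilinForm k V) (n : ℕ) :
    ∀ W : Submodule k V, n ≤ Module.finrank k W →
    ∃ (r : ℕ) (ε : k) (b : Fin n → V), (ε = 0 ∨ ε = 1) ∧ 2 * r ≤ n ∧ LinearIndependent k b ∧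
      (∀ i, b i ∈ W) ∧
      (∀ a c, a ≠ c → B (b a) (b c) + B (b c) (b a) =
        if (a : ℕ) < 2 * r ∧ (a : ℕ) / 2 = (c : ℕ) / 2 then 1 else 0) ∧
      (∀ a, B (b a) (b a) = if (a : ℕ) = 2 * r then ε else 0) := by
  have h2k : (2 : k) = 0 := CharP.cast_eq_zero k 2
  have htwo : ∀ x : k, x + x = 0 := fun x => by rw [← two_mul, h2k, zero_mul]
  induction n using Nat.strong_induction_on with
  | _ n IH =>
  intro W hW
  by_cases hA : ∃ u ∈ W, B u u = 0 ∧ ∃ v ∈ W, B u v + B v u ≠ 0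
  · obtain ⟨u, huW, huu, v, hvW, huv⟩ := hA
    match n, IH, hW with
    | 0, _, _ =>
      exact ⟨0, 0, Fin.elim0, Or.inl rfl, by omega, linearIndependent_empty_type,
        fun i => i.elim0, fun i => i.elim0, fun i => i.elim0⟩
    | 1, _, _ =>
      refine ⟨0, 0, fun _ => u, Or.inl rfl, by omega, ?_, fun _ => huW, ?_, ?_⟩
      · rw [linearIndependent_unique_iff]
        rintro h0
        simp [h0] at huv
      · intro a c hac
        exact absurd (Subsingleton.elim a c) hac
      · intro a; simp [huu]
    | n + 2, IH, hW =>
      set s := B u v + B v u with hs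
      set u' := s⁻¹ • u with hu'
      have hu'W : u' ∈ W := W.smul_mem _ huW
      have hu'u' : B u' u' = 0 := by simp [hu', huu]
      have hu'v : B u' v + B v u' = 1 := by
        simp only [hu', map_smul, LinearMap.smul_apply, smul_eq_mul]
        rw [← mul_add, ← hs, inv_mul_cancel₀ huv]
      clear_value u'
      set v' := v - B v v • u' with hv'
      have hv'W : v' ∈ W := W.sub_mem hvW (W.smul_mem _ hu'W)
      have hv'v' : B v' v' = 0 := by
        simp only [hv', map_sub, LinearMap.sub_apply, map_smul, LinearMap.smul_apply, smul_eq_mul, hu'u']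
        linear_combination (- B v v) * hu'v
      have hu'v' : B u' v' + B v' u' = 1 := by
        simp only [hv', map_sub, LinearMap.sub_apply, map_smul, LinearMap.smul_apply, smul_eq_mul, hu'u']
        linear_combination hu'v
      clear_value v'
      let Pf : V → V →ₗ[k] k := fun x => B x + B.flip x
      have hPf : ∀ x y, Pf x y = B x y + B y x := fun x y => rfl
      let L : W →ₗ[k] (k × k) := ((Pf u').prod (Pf v')).comp W.subtype
      let W' : Submodule k V := (LinearMap.ker L).map W.subtype
      have hW'm : ∀ w ∈ W', w ∈ W ∧ Pf u' w = 0 ∧ Pf v' w = 0 := by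
        rintro _ ⟨⟨w, hw⟩, hwk, rfl⟩
        have := LinearMap.mem_ker.1 hwk
        exact ⟨hw, congrArg Prod.fst this, congrArg Prod.snd this⟩
      have hW'f : n ≤ Module.finrank k W' := by
        have h1 : Module.finrank k W' = Module.finrank k (LinearMap.ker L) :=
          (Submodule.equivMapOfInjective W.subtype W.injective_subtype _).symm.finrank_eq
        have h2 := LinearMap.finrank_range_add_finrank_ker L
        have h3 : Module.finrank k (LinearMap.range L) ≤ 2 := by
          refine (Submodule.finrank_le _).trans ?_
          simp
        omega
      obtain ⟨r, ε, b, hε, hr, hli, hb, hP, hq⟩ := IH n (by omega) W' hW'f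
      have hspan : ∀ x ∈ Submodule.span k (Set.range b), x ∈ W' := by
        intro x hx
        have : Submodule.span k (Set.range b) ≤ W' := by
          rw [Submodule.span_le]; rintro _ ⟨i, rfl⟩; exact hb i
        exact this hx
      have z1 : ∀ i, B u' (b i) + B (b i) u' = 0 := fun i => (hW'm _ (hb i)).2.1
      have z2 : ∀ i, B v' (b i) + B (b i) v' = 0 := fun i => (hW'm _ (hb i)).2.2
      refine ⟨r + 1, ε, Fin.cons u' (Fin.cons v' b), hε, by omega, ?_, ?_, ?_, ?_⟩
      · rw [linearIndependent_finCons, linearIndependent_finCons]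
        refine ⟨⟨hli, ?_⟩, ?_⟩
        · intro h
          have := (hW'm _ (hspan _ h)).2.1
          rw [hPf, hu'v'] at this
          exact one_ne_zero this
        · intro h
          have h3 : Submodule.span k (Set.range (Fin.cons v' b : Fin (n+1) → V)) ≤ LinearMap.ker (Pf v') := by
            rw [Submodule.span_le]
            rintro _ ⟨i, rfl⟩
            refine Fin.cases ?_ (fun i => ?_) i
            · simp only [Fin.cons_zero, SetLike.mem_coe, LinearMap.mem_ker]
              rw [hPf]; exact htwo _
            · simp only [Fin.cons_succ, SetLike.mem_coe, LinearMap.mem_ker]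
              exact z2 i
          have := LinearMap.mem_ker.1 (h3 h)
          rw [hPf, add_comm, hu'v'] at this
          exact one_ne_zero this
      · refine Fin.cases hu'W (Fin.cases hv'W (fun i => (hW'm _ (hb i)).1))
      · have hsym : ∀ x y : V, B x y + B y x = B y x + B x y := fun x y => add_comm _ _
        refine Fin.cases ?_ (Fin.cases ?_ (fun i => ?_))
        · refine Fin.cases ?_ (Fin.cases ?_ (fun j => ?_)) <;> intro h
          · exact absurd rfl h
          · simp only [Fin.cons_zero, Fin.cons_succ]
            rw [hu'v', if_pos]; simp
          · simp only [Fin.cons_zero, Fin.cons_succ]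
            rw [z1, if_neg]; simp only [Fin.val_zero, Fin.val_succ]; omega
        · refine Fin.cases ?_ (Fin.cases ?_ (fun j => ?_)) <;> intro h
          · simp only [Fin.cons_zero, Fin.cons_succ]
            rw [hsym, hu'v', if_pos]; simp; omega
          · exact absurd rfl h
          · simp only [Fin.cons_zero, Fin.cons_succ]
            rw [z2, if_neg]; simp only [Fin.val_zero, Fin.val_succ]; omega
        · refine Fin.cases ?_ (Fin.cases ?_ (fun j => ?_)) <;> intro h
          · simp only [Fin.cons_zero, Fin.cons_succ]
            rw [hsym, z1, if_neg]; simp only [Fin.val_zero, Fin.val_succ]; omega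
          · simp only [Fin.cons_zero, Fin.cons_succ]
            rw [hsym, z2, if_neg]; simp only [Fin.val_zero, Fin.val_succ]; omega
          · simp only [Fin.cons_succ]
            rw [hP i j (by rintro rfl; exact h rfl)]
            simp only [Fin.val_succ]
            congr 1
            apply propext; omega
      · refine Fin.cases ?_ (Fin.cases ?_ (fun i => ?_))
        · simp [hu'u']
        · rw [if_neg (by simp only [Fin.val_zero, Fin.val_succ]; omega)]
          simp only [Fin.cons_zero, Fin.cons_succ, hv'v']
        · simp only [Fin.cons_succ, hq, Fin.val_succ]
          congr 1
          apply propext; omega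
  · push Not at hA
    by_cases hq0 : ∀ w ∈ W, B w w = 0
    · obtain ⟨b, hli, hb⟩ := exists_li W n hW
      refine ⟨0, 0, b, Or.inl rfl, by omega, hli, hb, ?_, ?_⟩
      · intro a c _
        simp [hA _ (hb a) (hq0 _ (hb a)) _ (hb c)]
      · intro a; simp [hq0 _ (hb a)]
    · push Not at hq0
      obtain ⟨y, hyW, hy⟩ := hq0
      match n, hW with
      | 0, _ =>
        exact ⟨0, 0, Fin.elim0, Or.inl rfl, by omega, linearIndependent_empty_type,
          fun i => i.elim0, fun i => i.elim0, fun i => i.elim0⟩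
      | n + 1, hW =>
        let Z : Submodule k V :=
          { carrier := {w | w ∈ W ∧ B w w = 0}
            add_mem' := by
              rintro a b ⟨ha, ha'⟩ ⟨hb, hb'⟩
              refine ⟨W.add_mem ha hb, ?_⟩
              rw [polar_add, ha', hb', hA a ha ha' b hb]; simp
            zero_mem' := ⟨W.zero_mem, by simp⟩
            smul_mem' := by
              rintro c a ⟨ha, ha'⟩
              exact ⟨W.smul_mem _ ha, by simp [ha']⟩ }
        have hZ : ∀ z, z ∈ Z ↔ z ∈ W ∧ B z z = 0 := fun z => Iff.rfl
        obtain ⟨t, ht⟩ := IsAlgClosed.exists_pow_nat_eq ((B y y)⁻¹) (n := 2) (by omega)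
        have ht0 : t ≠ 0 := by
          rintro rfl
          rw [zero_pow (by omega)] at ht
          exact hy (inv_eq_zero.1 ht.symm)
        obtain ⟨y', hy'⟩ : ∃ y', y' = t • y := ⟨_, rfl⟩
        have hy'W : y' ∈ W := hy' ▸ W.smul_mem _ hyW
        have hy'1 : B y' y' = 1 := by
          rw [hy']; simp only [map_smul, LinearMap.smul_apply, smul_eq_mul]
          rw [← mul_assoc, ← pow_two, ht, inv_mul_cancel₀ hy]
        have hle : W ≤ Z ⊔ Submodule.span k {y'} := by
          intro w hw
          let pol : Polynomial k := Polynomial.C 1 * Polynomial.X ^ 2 + Polynomial.C (B w y' + B y' w) * Polynomial.X + Polynomial.C (B w w)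
          obtain ⟨s, hs⟩ := IsAlgClosed.exists_root pol (by
            rw [Polynomial.degree_quadratic one_ne_zero]; exact two_ne_zero)
          have hs' : s ^ 2 + (B w y' + B y' w) * s + B w w = 0 := by
            simpa [pol, Polynomial.IsRoot] using hs
          have hz : w + s • y' ∈ Z := by
            rw [hZ]
            refine ⟨W.add_mem hw (W.smul_mem _ hy'W), ?_⟩
            rw [polar_add]
            simp only [map_smul, LinearMap.smul_apply, smul_eq_mul, hy'1]
            linear_combination hs'
          rw [Submodule.mem_sup]
          exact ⟨_, hz, -(s • y'), Submodule.neg_mem _ (Submodule.smul_mem _ _ (Submodule.mem_span_singleton_self _)), by simp⟩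
        have hZf : n ≤ Module.finrank k Z := by
          have h1 := Submodule.finrank_mono hle
          have h2 := Submodule.finrank_add_le_finrank_add_finrank Z (Submodule.span k {y'})
          have h3 : Module.finrank k (Submodule.span k {y'}) ≤ 1 := (finrank_span_le_card _).trans (by simp)
          omega
        obtain ⟨b, hli, hb⟩ := exists_li Z n hZf
        refine ⟨0, 1, Fin.cons y' b, Or.inr rfl, by omega, ?_, ?_, ?_, ?_⟩
        · rw [linearIndependent_finCons]
          refine ⟨hli, fun h => ?_⟩
          have : Submodule.span k (Set.range b) ≤ Z := by
            rw [Submodule.span_le]; rintro _ ⟨i, rfl⟩; exact hb i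
          have := ((hZ _).1 (this h)).2
          rw [hy'1] at this
          exact one_ne_zero this
        · exact Fin.cases hy'W (fun i => ((hZ _).1 (hb i)).1)
        · refine Fin.cases ?_ (fun i => ?_)
          · refine Fin.cases (fun h => absurd rfl h) (fun j _ => ?_)
            simp only [Fin.cons_zero, Fin.cons_succ]
            rw [add_comm, hA _ ((hZ _).1 (hb j)).1 ((hZ _).1 (hb j)).2 _ hy'W, if_neg]; omega
          · intro j _
            simp only [Fin.cons_succ]
            have hj : (Fin.cons y' b : Fin (n+1) → V) j ∈ W := by
              refine Fin.cases hy'W (fun i => ((hZ _).1 (hb i)).1) j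
            rw [hA _ ((hZ _).1 (hb i)).1 ((hZ _).1 (hb i)).2 _ hj, if_neg]; omega
        · refine Fin.cases ?_ (fun i => ?_)
          · simp [hy'1]
          · simp [((hZ _).1 (hb i)).2]

end qnf
end HKdich

namespace HKdich
set_option linter.unusedSectionVars false

section nf
variable {k : Type*} [Field k]

def aF (d r : ℕ) (h : 2 * r ≤ d + 1) : Fin r → Fin (d + 1) := fun i => ⟨2 * i, by omega⟩
def bF (d r : ℕ) (h : 2 * r ≤ d + 1) : Fin r → Fin (d + 1) := fun i => ⟨2 * i + 1, by omega⟩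

lemma aF_inj (d r : ℕ) (h : 2 * r ≤ d + 1) : Function.Injective (aF d r h) := by
  intro i j hij
  simp only [aF, Fin.mk.injEq] at hij
  ext; omega
lemma bF_inj (d r : ℕ) (h : 2 * r ≤ d + 1) : Function.Injective (bF d r h) := by
  intro i j hij
  simp only [bF, Fin.mk.injEq] at hij
  ext; omega
lemma aF_ne_bF (d r : ℕ) (h : 2 * r ≤ d + 1) (i j : Fin r) : aF d r h i ≠ bF d r h j := by
  intro hij
  simp only [aF, bF, Fin.mk.injEq] at hij
  omega

lemma mem_pairF {d r : ℕ} {h : 2 * r ≤ d + 1} {j : Fin (d + 1)} :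
    j ∈ pairS (aF d r h) (bF d r h) ↔ (j : ℕ) < 2 * r := by
  rw [mem_pairS]
  constructor
  · rintro (⟨i, rfl⟩ | ⟨i, rfl⟩) <;> simp only [aF, bF] <;> omega
  · intro hj
    rcases Nat.mod_two_eq_zero_or_one j with h0 | h0
    · left; exact ⟨⟨j / 2, by omega⟩, by ext; simp only [aF]; omega⟩
    · right; exact ⟨⟨j / 2, by omega⟩, by ext; simp only [bF]; omega⟩

/-- the possible square term -/
noncomputable def sqT (d r : ℕ) (ε : k) : MvPowerSeries (Fin (d + 1)) k :=
  ∑ a : Fin (d + 1), (if (a : ℕ) = 2 * r then C ε else 0) * X a ^ 2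

lemma sqT_eq (d r : ℕ) (ε : k) (h : 2 * r < d + 1) :
    sqT d r ε = C ε * X (⟨2 * r, h⟩ : Fin (d + 1)) ^ 2 := by
  rw [sqT, Finset.sum_eq_single (⟨2 * r, h⟩ : Fin (d+1))]
  · simp
  · intro b _ hb
    rw [if_neg, zero_mul]
    intro hb'
    apply hb; ext; exact hb'
  · simp

lemma sqT_eq_zero (d r : ℕ) (ε : k) (h : d + 1 ≤ 2 * r) : sqT d r ε = 0 := by
  rw [sqT]
  apply Finset.sum_eq_zero
  intro a _
  rw [if_neg, zero_mul]
  omega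

lemma quad_zero {σ : Type*} [Fintype σ] [DecidableEq σ] (D : σ → σ → k)
    (h0 : ∀ a, D a a = 0) (h1 : ∀ a c, a ≠ c → D a c + D c a = 0) :
    ∑ p : σ × σ, C (D p.1 p.2) * (X p.1 * X p.2 : MvPowerSeries σ k) = 0 := by
  apply Finset.sum_involution (fun p _ => (p.2, p.1))
  · rintro ⟨a, c⟩ _
    simp only
    by_cases h : a = c
    · subst h; simp [h0]
    · have : (C (D a c) + C (D c a) : MvPowerSeries σ k) = 0 := by rw [← map_add, h1 a c h, map_zero]
      linear_combination (X a * X c) * this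
  · rintro ⟨a, c⟩ _ h hc
    simp only [Prod.mk.injEq] at hc
    obtain ⟨rfl, -⟩ := hc
    simp [h0] at h
  · intros; simp
  · intros; rfl

lemma quad_part {σ : Type*} [Fintype σ] [DecidableEq σ] (F : MvPowerSeries σ k) (hF : F ∈ J σ k 2) :
    ∃ N : Matrix σ σ k, F - ∑ p : σ × σ, C (N p.1 p.2) * (X p.1 * X p.2) ∈ J σ k 3 := by
  obtain ⟨a, h1, h2⟩ := decomp_univ 1 F hF
  have h3 := fun j => decomp_univ 0 (a j) (h2 j)
  choose b h4 h5 using h3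
  refine ⟨fun i j => constantCoeff (b i j), ?_⟩
  have : F - ∑ p : σ × σ, C (constantCoeff (b p.1 p.2)) * (X p.1 * X p.2) =
      ∑ p : σ × σ, X p.1 * X p.2 * (b p.1 p.2 - C (constantCoeff (b p.1 p.2))) := by
    have h6 : F = ∑ p : σ × σ, X p.1 * X p.2 * b p.1 p.2 := by
      rw [Fintype.sum_prod_type]
      rw [h1]
      apply Finset.sum_congr rfl
      intro i _
      rw [h4 i, Finset.mul_sum]
      apply Finset.sum_congr rfl
      intro j _
      ring
    conv_lhs => rw [h6]
    rw [← Finset.sum_sub_distrib]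
    apply Finset.sum_congr rfl
    intro p _; ring
  rw [this]
  apply sum_mem
  intro p _
  have h7 : b p.1 p.2 - C (constantCoeff (b p.1 p.2)) ∈ J σ k 1 := by rw [mem_J_one]; simp
  exact J_mul (J_mul (X_mem_J p.1) (X_mem_J p.2) (le_refl _)) h7 (by omega)

theorem nf [IsAlgClosed k] [CharP k 2] (d : ℕ) (F : MvPowerSeries (Fin (d + 1)) k)
    (hF : F ∈ J (Fin (d+1)) k 2) :
    ∃ (r : ℕ) (hr : 2 * r ≤ d + 1) (ε : k) (F' : MvPowerSeries (Fin (d + 1)) k),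
      (ε = 0 ∨ ε = 1) ∧ Rel F F' ∧
      F' - hyp k (aF d r hr) (bF d r hr) - sqT d r ε ∈ J (Fin (d+1)) k 3 := by
  obtain ⟨N, hN⟩ := quad_part F hF
  obtain ⟨r, ε, b, hε, hr, hli, -, hP, hq⟩ := qnf (V := Fin (d+1) → k) (Matrix.toBilin' N) (d + 1) ⊤ (by simp)
  let M : Matrix (Fin (d+1)) (Fin (d+1)) k := fun i a => b a i
  have hM : IsUnit M.det := by
    have h1 : LinearIndependent k M.col := hli
    rw [Matrix.linearIndependent_cols_iff_isUnit] at h1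
    exact (Matrix.isUnit_iff_isUnit_det M).1 h1
  obtain ⟨Φ, hΦ⟩ := lin_equiv M hM
  refine ⟨r, hr, ε, Φ F, hε, ⟨Φ, 1, isUnit_one, by rw [one_mul]⟩, ?_⟩
  have hJ := algHom_J (Φ : MvPowerSeries (Fin (d+1)) k →ₐ[k] _) (by
    intro i
    change Φ (X i) ∈ _
    rw [hΦ]
    apply sum_mem
    intro a _
    rw [smul_eq_C_mul]
    exact Ideal.mul_mem_left _ _ (X_mem_J _)) 3 _ hN
  change Φ _ ∈ _ at hJ
  have hΦC : ∀ x, Φ (C x) = C x := fun x => Φ.commutes x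
  have e1 : Φ (∑ p : Fin (d+1) × Fin (d+1), C (N p.1 p.2) * (X p.1 * X p.2)) =
      ∑ p : Fin (d+1) × Fin (d+1), C (Matrix.toBilin' N (b p.1) (b p.2)) * (X p.1 * X p.2) := by
    rw [map_sum]
    simp only [map_mul, hΦC, hΦ, smul_eq_C_mul]
    simp only [Finset.sum_mul_sum]
    simp only [Finset.mul_sum]
    simp only [Matrix.toBilin'_apply, map_sum, Finset.sum_mul, map_mul]
    rw [Fintype.sum_prod_type, Fintype.sum_prod_type]
    calc _ = ∑ i, ∑ a, ∑ j, ∑ c, (C (N i j) * ((C (M i a) * X a) * (C (M j c) * X c)) : MvPowerSeries (Fin (d+1)) k) := by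
            apply Finset.sum_congr rfl; intro i _; rw [Finset.sum_comm]
      _ = ∑ a, ∑ i, ∑ j, ∑ c, (C (N i j) * ((C (M i a) * X a) * (C (M j c) * X c)) : MvPowerSeries (Fin (d+1)) k) := by
            rw [Finset.sum_comm]
      _ = ∑ a, ∑ i, ∑ c, ∑ j, (C (N i j) * ((C (M i a) * X a) * (C (M j c) * X c)) : MvPowerSeries (Fin (d+1)) k) := by
            apply Finset.sum_congr rfl; intro a _; apply Finset.sum_congr rfl; intro i _; rw [Finset.sum_comm]
      _ = ∑ a, ∑ c, ∑ i, ∑ j, (C (N i j) * ((C (M i a) * X a) * (C (M j c) * X c)) : MvPowerSeries (Fin (d+1)) k) := by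
            apply Finset.sum_congr rfl; intro a _; rw [Finset.sum_comm]
      _ = _ := by
            apply Finset.sum_congr rfl; intro a _
            apply Finset.sum_congr rfl; intro c _
            apply Finset.sum_congr rfl; intro i _
            apply Finset.sum_congr rfl; intro j _
            simp only [M]; ring
  let N2 : Fin (d+1) → Fin (d+1) → k := fun a c =>
    (∑ i : Fin r, if a = aF d r hr i ∧ c = bF d r hr i then 1 else 0) +
      if a = c ∧ (a : ℕ) = 2 * r then ε else 0
  have e2 : hyp k (aF d r hr) (bF d r hr) + sqT d r ε =
      ∑ p : Fin (d+1) × Fin (d+1), C (N2 p.1 p.2) * (X p.1 * X p.2) := by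
    simp only [N2, map_add, add_mul, Finset.sum_add_distrib]
    congr 1
    · simp only [map_sum, Finset.sum_mul]
      rw [Finset.sum_comm, hyp]
      apply Finset.sum_congr rfl
      intro i _
      rw [Finset.sum_eq_single (aF d r hr i, bF d r hr i)]
      · simp
      · rintro ⟨a, c⟩ _ h
        rw [if_neg, map_zero, zero_mul]
        rintro ⟨rfl, rfl⟩; exact h rfl
      · simp
    · rw [sqT, Fintype.sum_prod_type]
      apply Finset.sum_congr rfl
      intro a _
      rw [Finset.sum_eq_single a]
      · by_cases h : (a : ℕ) = 2 * r <;> simp [h, pow_two]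
      · intro c _ hc
        rw [if_neg, map_zero, zero_mul]
        rintro ⟨h1, -⟩; exact hc h1.symm
      · simp
  have e3 : ∑ p : Fin (d+1) × Fin (d+1), C (Matrix.toBilin' N (b p.1) (b p.2)) * (X p.1 * X p.2) =
      hyp k (aF d r hr) (bF d r hr) + sqT d r ε := by
    rw [e2, ← sub_eq_zero, ← Finset.sum_sub_distrib]
    have := quad_zero (fun a c => Matrix.toBilin' N (b a) (b c) - N2 a c) ?_ ?_
    · simpa [sub_mul] using this
    · intro a
      simp only [N2, hq]
      rw [Finset.sum_eq_zero]
      · simp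
      · intro i _
        rw [if_neg]
        rintro ⟨h1, h2⟩
        exact aF_ne_bF d r hr i i (h1.symm.trans h2)
    · intro a c hac
      simp only [N2]
      rw [if_neg (fun h => hac h.1), if_neg (fun h => hac h.1.symm)]
      have h3 := hP a c hac
      have h4 : (∑ i : Fin r, if a = aF d r hr i ∧ c = bF d r hr i then (1 : k) else 0) +
          (∑ i : Fin r, if c = aF d r hr i ∧ a = bF d r hr i then (1 : k) else 0) =
          if (a : ℕ) < 2 * r ∧ (a : ℕ) / 2 = (c : ℕ) / 2 then 1 else 0 := by
        rw [← Finset.sum_add_distrib]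
        have hac' : (a : ℕ) ≠ c := fun h => hac (Fin.ext h)
        simp only [aF, bF, Fin.ext_iff]
        split_ifs with h
        · rw [Finset.sum_eq_single (⟨(a : ℕ) / 2, by omega⟩ : Fin r)]
          · simp only
            rcases Nat.mod_two_eq_zero_or_one a with h0 | h0
            · rw [if_pos (by omega), if_neg (by omega), add_zero]
            · rw [if_neg (by omega), if_pos (by omega), zero_add]
          · intro i _ hi
            have : (i : ℕ) ≠ (a : ℕ) / 2 := fun h => hi (Fin.ext h)
            rw [if_neg (by omega), if_neg (by omega), add_zero]
          · simp
        · apply Finset.sum_eq_zero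
          intro i _
          rw [if_neg (by omega), if_neg (by omega), add_zero]
      linear_combination h3 - h4
  rw [map_sub, e1, e3] at hJ
  rwa [sub_sub]

/-- removing coefficients -/
lemma twist {σ : Type*} [Fintype σ] [DecidableEq σ] {ι : Type*} [Fintype ι] [DecidableEq ι]
    {α β : ι → σ} (hα : Function.Injective α)
    (hβ : Function.Injective β) (hαβ : ∀ i j, α i ≠ β j) (F c0 : MvPowerSeries σ k)
    (hc0 : Free (pairS α β) c0) (s t : ι → k) (hs : ∀ i, s i ≠ 0)
    (hF : F - ∑ i, X (α i) * (C (s i) * X (β i) + C (t i) * X (α i)) - c0 ∈ J σ k 3) :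
    ∃ F', Rel F F' ∧ F' - hyp k α β - c0 ∈ J σ k 3 := by
  obtain ⟨ξ, h1, h2, h3⟩ := exists_pair_fun hα hβ hαβ (fun i => (X (α i) : MvPowerSeries σ k))
    (fun i => C (s i)⁻¹ * (X (β i) - C (t i) * X (α i)))
  obtain ⟨ζ, g1, g2, g3⟩ := exists_pair_fun hα hβ hαβ (fun i => (X (α i) : MvPowerSeries σ k))
    (fun i => C (s i) * X (β i) + C (t i) * X (α i))
  have hcases : ∀ j, (∃ i, β i = j) ∨ (ξ j = X j ∧ ζ j = X j) := by
    intro j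
    by_cases hj : j ∈ pairS α β
    · rcases mem_pairS.1 hj with ⟨i, rfl⟩ | h
      · exact Or.inr ⟨h1 i, g1 i⟩
      · exact Or.inl h
    · exact Or.inr ⟨h3 j hj, g3 j hj⟩
  have m1 : ∀ j, ξ j ∈ J σ k 1 := by
    intro j
    rcases hcases j with ⟨i, rfl⟩ | h
    · rw [h2]
      exact Ideal.mul_mem_left _ _ (sub_mem (X_mem_J _) (Ideal.mul_mem_left _ _ (X_mem_J _)))
    · rw [h.1]; exact X_mem_J _
  have m2 : ∀ j, ζ j ∈ J σ k 1 := by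
    intro j
    rcases hcases j with ⟨i, rfl⟩ | h
    · rw [g2]
      exact add_mem (Ideal.mul_mem_left _ _ (X_mem_J _)) (Ideal.mul_mem_left _ _ (X_mem_J _))
    · rw [h.2]; exact X_mem_J _
  obtain ⟨φ, hφ⟩ := exists_sub ξ m1
  obtain ⟨ψ, hψ⟩ := exists_sub ζ m2
  have hφC : ∀ x, φ (C x) = C x := fun x => φ.commutes x
  have hψC : ∀ x, ψ (C x) = C x := fun x => ψ.commutes x
  have hC : ∀ i, (C (s i)⁻¹ : MvPowerSeries σ k) * C (s i) = 1 := by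
    intro i
    rw [← map_mul, inv_mul_cancel₀ (hs i), map_one]
  have key : ∀ i, φ (C (s i) * X (β i) + C (t i) * X (α i)) = X (β i) := by
    intro i
    rw [map_add, map_mul, map_mul, hφC, hφC, hφ, hφ, h1, h2]
    linear_combination (X (β i) - C (t i) * X (α i)) * hC i
  obtain ⟨Φ, hΦ⟩ := exists_equiv ξ ζ φ ψ hφ hψ (by
    intro j
    rcases hcases j with ⟨i, rfl⟩ | h
    · rw [g2, key]; simp
    · rw [h.2, hφ, h.1]; simp) (by
    intro j
    rcases hcases j with ⟨i, rfl⟩ | h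
    · rw [h2, map_mul, map_sub, map_mul, hψC, hψC, hψ, hψ, g1, g2]
      have : C (s i)⁻¹ * (C (s i) * X (β i) + C (t i) * X (α i) - C (t i) * X (α i)) - X (β i) = (0 : MvPowerSeries σ k) := by
        linear_combination X (β i) * hC i
      rw [this]; exact zero_mem _
    · rw [h.1, hψ, h.2]; simp)
  refine ⟨φ F, ⟨Φ, 1, isUnit_one, by rw [hΦ, one_mul]⟩, ?_⟩
  have := algHom_J φ (fun i => by rw [hφ]; exact m1 i) 3 _ hF
  rw [map_sub, map_sub, free_fixed (pairS α β) φ (fun j hj => by rw [hφ, h3 j hj]) c0 hc0, map_sum] at this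
  convert this using 3
  rw [hyp]
  apply Finset.sum_congr rfl
  intro i _
  rw [map_mul, key, hφ, h1]

/-- deformation to a form with more hyperbolic planes -/
theorem deform [IsAlgClosed k] [CharP k 2] (d r r' : ℕ) (hr : 2 * r ≤ d + 1) (hr' : 2 * r' ≤ d + 1)
    (hrr : r ≤ r') (ε : k) (F : MvPowerSeries (Fin (d + 1)) k)
    (hF : F - hyp k (aF d r hr) (bF d r hr) - sqT d r ε ∈ J (Fin (d+1)) k 3) (e : ℕ) :
    ∃ G : MvPowerSeries (Fin (d+1)) k, HQ (2^e) G ≤ HQ (2^e) F ∧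
      G - hyp k (aF d r' hr') (bF d r' hr') - (if r < r' then 0 else sqT d r' ε) ∈ J (Fin (d+1)) k 3 := by
  have : Infinite k := IsAlgClosed.instInfinite
  set P : MvPowerSeries (Fin (d+1)) k := ∑ i : Fin r', if (i : ℕ) < r then 0 else X (aF d r' hr' i) * X (bF d r' hr' i) with hP
  obtain ⟨t, ht, hle⟩ := HQ_semicont (2^e) F P {0}
  have ht0 : t ≠ 0 := by simpa using ht
  have h1 : hyp k (aF d r hr) (bF d r hr) = ∑ i : Fin r', if (i : ℕ) < r then X (aF d r' hr' i) * X (bF d r' hr' i) else 0 := by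
    rw [← Finset.sum_filter, hyp]
    refine Finset.sum_bij (fun i _ => Fin.castLE hrr i) ?_ ?_ ?_ ?_
    · intro i _; simp
    · intro i _ j _ h; exact Fin.castLE_injective hrr h
    · intro i hi
      simp only [Finset.mem_filter, Finset.mem_univ, true_and] at hi
      exact ⟨⟨i, hi⟩, Finset.mem_univ _, rfl⟩
    · intro i _; rfl
  obtain ⟨G, hG, hG2⟩ := twist (aF_inj d r' hr') (bF_inj d r' hr') (aF_ne_bF d r' hr') (F + t • P)
    (if r < r' then 0 else sqT d r' ε) (by
      split_ifs with h
      · intro p _ _ _; simp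
      · intro p j hj hp
        rw [mem_pairF] at hj
        by_cases h2 : 2 * r' < d + 1
        · rw [sqT_eq d r' ε h2, coeff_C_mul, coeff_X_pow, if_neg, mul_zero]
          rintro rfl
          rw [Finsupp.single_apply, if_neg] at hp
          · exact hp rfl
          · rintro rfl; simp at hj
        · rw [sqT_eq_zero d r' ε (by omega)]; simp)
    (fun i => if (i : ℕ) < r then 1 else t) (fun i => if (i : ℕ) = r then ε else 0) (by
      intro i; split_ifs
      · exact one_ne_zero
      · exact ht0) (by
      convert hF using 1
      have h3 : sqT d r ε = ∑ i : Fin r', (if (i : ℕ) = r then C ε else 0) * (X (aF d r' hr' i) * X (aF d r' hr' i)) + (if r < r' then 0 else sqT d r' ε) := by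
        split_ifs with h
        · rw [sqT_eq d r ε (by omega), add_zero, Finset.sum_eq_single (⟨r, h⟩ : Fin r')]
          · simp [aF, pow_two]
          · intro i _ hi
            rw [if_neg, zero_mul]
            intro h; exact hi (Fin.ext h)
          · simp
        · have : r = r' := by omega
          subst this
          rw [Finset.sum_eq_zero, zero_add]
          intro i _
          rw [if_neg, zero_mul]
          omega
      rw [h3, h1, hP, smul_eq_C_mul, Finset.mul_sum]
      have h4 : ∑ i : Fin r', X (aF d r' hr' i) * (C (if (i : ℕ) < r then 1 else t) * X (bF d r' hr' i) +
          C (if (i : ℕ) = r then ε else 0) * X (aF d r' hr' i)) =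
          (∑ i : Fin r', if (i : ℕ) < r then X (aF d r' hr' i) * X (bF d r' hr' i) else 0) +
          (∑ i : Fin r', C t * if (i : ℕ) < r then 0 else X (aF d r' hr' i) * X (bF d r' hr' i)) +
          ∑ i : Fin r', (if (i : ℕ) = r then C ε else 0) * (X (aF d r' hr' i) * X (aF d r' hr' i)) := by
        rw [← Finset.sum_add_distrib, ← Finset.sum_add_distrib]
        apply Finset.sum_congr rfl
        intro i _
        by_cases h5 : (i : ℕ) < r <;> by_cases h6 : (i : ℕ) = r <;> simp [h5, h6] <;> first | ring | omega
      rw [h4]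
      ring)
  exact ⟨G, by rw [← hG.HQ_eq e]; exact hle, hG2⟩

end nf
end HKdich


namespace HKdich
set_option linter.unusedSectionVars false

section upper
variable {k : Type*} [Field k]

lemma biota_coeff {σ : Type*} [Fintype σ] [DecidableEq σ] (q : ℕ) (v : (σ → Fin q) → k) (b : σ →₀ ℕ)
    (h : coeff b (biota σ k q v) ≠ 0) : ∃ p : σ → Fin q, toExp p = b ∧ v p ≠ 0 := by
  simp only [biota_apply, map_sum, coeff_monomial] at h
  obtain ⟨p, -, hp⟩ := Finset.exists_ne_zero_of_sum_ne_zero h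
  by_cases hb : b = toExp p
  · exact ⟨p, hb.symm, by simpa [hb] using hp⟩
  · simp [hb] at hp

lemma HQ_le_bad (d q : ℕ) (F : MvPowerSeries (Fin (d+1)) k) (a : Fin (d+1) →₀ ℕ)
    (ha : lexOrder F = toLex a) :
    HQ q F ≤ Fintype.card {p : Fin (d+1) → Fin q // ∃ i, q ≤ p i + a i} := by
  rw [HQ_ker]
  let R : LinearMap.ker (TF q F) →ₗ[k] ({p : Fin (d+1) → Fin q // ∃ i, q ≤ p i + a i} → k) :=
    (LinearMap.funLeft k k (fun p : {p : Fin (d+1) → Fin q // ∃ i, q ≤ p i + a i} => p.1)).comp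
      (LinearMap.ker (TF q F)).subtype
  have hR : Function.Injective R := by
    rw [← LinearMap.ker_eq_bot, LinearMap.ker_eq_bot']
    rintro ⟨v, hv⟩ h0
    have h0' : ∀ p : Fin (d+1) → Fin q, (∃ i, q ≤ p i + a i) → v p = 0 := by
      intro p hp
      exact congrFun h0 ⟨p, hp⟩
    by_contra hne
    have hG : biota _ k q v ≠ 0 := by
      intro h
      apply hne
      have := bpi_biota q v
      rw [h, map_zero] at this
      exact Subtype.ext this.symm
    obtain ⟨b, hb⟩ := exists_finsupp_eq_lexOrder_of_ne_zero hG
    have h1 := coeff_mul_of_add_lexOrder ha hb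
    have h2 := coeff_ne_zero_of_lexOrder ha.symm
    have h3 := coeff_ne_zero_of_lexOrder hb.symm
    obtain ⟨p, rfl, hp⟩ := biota_coeff q v b h3
    have h4 : ∀ i, (a + toExp p) i < q := by
      intro i
      by_contra h
      apply hp (h0' p ⟨i, ?_⟩)
      simp at h
      omega
    obtain ⟨p', hp'⟩ := exists_toExp _ h4
    have h5 : bpi _ k q (F * biota _ k q v) = 0 := by
      rw [← TF_bpi, bpi_biota]; exact hv
    have h6 := congrFun h5 p'
    rw [bpi_apply, hp', h1] at h6
    exact mul_ne_zero h2 h3 h6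
  have := LinearMap.finrank_le_finrank_of_injective hR
  simpa using this

lemma card_slice (d q a : ℕ) (i : Fin (d+1)) :
    (Finset.univ.filter (fun p : Fin (d+1) → Fin q => q ≤ p i + a)).card ≤ a * q ^ d := by
  have h1 : (Finset.univ.filter (fun p : Fin (d+1) → Fin q => q ≤ p i + a)) ⊆
      Fintype.piFinset (fun j => if j = i then (Finset.univ.filter (fun x : Fin q => q ≤ x + a)) else Finset.univ) := by
    intro p hp
    simp only [Finset.mem_filter, Finset.mem_univ, true_and] at hp
    rw [Fintype.mem_piFinset]
    intro j
    split_ifs with h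
    · subst h; simpa using hp
    · simp
  refine (Finset.card_le_card h1).trans ?_
  rw [Fintype.card_piFinset, ← Finset.mul_prod_erase _ _ (Finset.mem_univ i), if_pos rfl]
  have h2 : ∏ j ∈ Finset.univ.erase i, (if j = i then (Finset.univ.filter (fun x : Fin q => q ≤ x + a)) else Finset.univ).card = q ^ d := by
    rw [Finset.prod_congr rfl (g := fun _ => q)]
    · simp
    · intro j hj
      rw [if_neg (Finset.ne_of_mem_erase hj)]; simp
  rw [h2]
  apply Nat.mul_le_mul_right
  have h3 : (Finset.univ.filter (fun x : Fin q => q ≤ x + a)).card ≤ (Finset.Ico (q - a) q).card := by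
    apply Finset.card_le_card_of_injOn (fun x : Fin q => (x : ℕ))
    · intro x hx
      simp only [Finset.coe_filter, Finset.mem_univ, true_and, Set.mem_ofPred_eq] at hx
      simp; omega
    · intro x _ y _ h; exact Fin.ext h
  refine h3.trans ?_
  simp; omega

lemma upper (d : ℕ) (F : MvPowerSeries (Fin (d+1)) k) (hF : F ≠ 0) :
    ∃ C : ℕ, ∀ q, HQ q F ≤ C * q ^ d := by
  obtain ⟨a, ha⟩ := exists_finsupp_eq_lexOrder_of_ne_zero hF
  refine ⟨∑ i, a i, fun q => (HQ_le_bad d q F a ha).trans ?_⟩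
  rw [Fintype.card_subtype, Finset.sum_mul]
  refine (Finset.card_le_card (t := Finset.univ.biUnion (fun i => Finset.univ.filter (fun p : Fin (d+1) → Fin q => q ≤ p i + a i))) ?_).trans ?_
  · intro p hp
    simpa using hp
  · refine Finset.card_biUnion_le.trans ?_
    exact Finset.sum_le_sum (fun i _ => card_slice d q (a i) i)

end upper
end HKdich


namespace HKdich
set_option linter.unusedSectionVars false

section count
variable {σ : Type*} [Fintype σ] [DecidableEq σ] {k : Type*} [Field k]
variable {ι : Type*} [Fintype ι] [DecidableEq ι]

open Classical in
noncomputable def wt (a : ι → σ →₀ ℕ) (o : ι → (σ →₀ ℕ) → ℕ) (ν : ℕ → k) (t : k)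
    (p p' : σ →₀ ℕ) : k :=
  if p' + ∑ j, o j p • a j = p + ∑ j, o j p' • a j then
    ∏ i, ∏ b ∈ Finset.range (o i p'), (t * ν (o i p) - t * ν b) else 0

variable (a : ι → σ →₀ ℕ) (o : ι → (σ →₀ ℕ) → ℕ) (ν : ℕ → k) (t : k)

lemma wt_le {p p' : σ →₀ ℕ} (h : wt a o ν t p p' ≠ 0) : p' ≤ p := by
  unfold wt at h
  split_ifs at h with h1
  · have h2 : ∀ i, o i p' ≤ o i p := by
      intro i
      by_contra hi
      apply h
      apply Finset.prod_eq_zero (Finset.mem_univ i)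
      apply Finset.prod_eq_zero (i := o i p)
      · simp; omega
      · simp
    have h3 : ∑ j, o j p' • a j ≤ ∑ j, o j p • a j := by
      apply Finset.sum_le_sum
      intro i _
      exact nsmul_le_nsmul_left zero_le (h2 i)
    have h4 : p' + ∑ j, o j p • a j ≤ p + ∑ j, o j p • a j := by
      rw [h1]; gcongr
    exact le_of_add_le_add_right h4
  · exact absurd rfl h

lemma wt_step (ho : ∀ i j p, o j (p + a i) = o j p + if j = i then 1 else 0) (p p' : σ →₀ ℕ) (i : ι) :
    wt a o ν t p (p' + a i) = wt a o ν t p p' * (t * ν (o i p) - t * ν (o i p')) := by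
  have h1 : ∑ j, o j (p' + a i) • a j = ∑ j, o j p' • a j + a i := by
    simp only [ho, add_smul, Finset.sum_add_distrib, ite_smul, one_smul, zero_smul]
    simp
  unfold wt
  have h2 : (p' + a i + ∑ j, o j p • a j = p + ∑ j, o j (p' + a i) • a j) ↔
      (p' + ∑ j, o j p • a j = p + ∑ j, o j p' • a j) := by
    rw [h1, ← add_assoc, add_right_comm p' (a i), add_left_inj]
  simp only [h2]
  split_ifs
  · rw [← Finset.mul_prod_erase _ _ (Finset.mem_univ i),
      ← Finset.mul_prod_erase (s := Finset.univ) (a := i) (f := fun i => ∏ b ∈ Finset.range (o i p'), (t * ν (o i p) - t * ν b)) (Finset.mem_univ i)]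
    have h3 : ∏ j ∈ Finset.univ.erase i, ∏ b ∈ Finset.range (o j (p' + a i)), (t * ν (o j p) - t * ν b) =
       ∏ j ∈ Finset.univ.erase i, ∏ b ∈ Finset.range (o j p'), (t * ν (o j p) - t * ν b) := by
      apply Finset.prod_congr rfl
      intro j hj
      rw [ho, if_neg (Finset.ne_of_mem_erase hj), add_zero]
    rw [h3, ho, if_pos rfl, Finset.prod_range_succ]
    ring
  · simp

noncomputable def Ev (q : ℕ) : Module.End k ((σ → Fin q) → k) :=
  LinearMap.pi (fun p => ∑ p', wt a o ν t (toExp p) (toExp p') • LinearMap.proj p')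

lemma Ev_apply (q : ℕ) (v : (σ → Fin q) → k) (p : σ → Fin q) :
    Ev a o ν t q v p = ∑ p', wt a o ν t (toExp p) (toExp p') * v p' := by
  simp [Ev]

open Classical in
lemma Ev_inj (q : ℕ) (ht : t ≠ 0) (Q : ℕ) (hν : ∀ x < Q, ∀ y < Q, ν x = ν y → x = y)
    (hq : ∀ i (p : σ → Fin q), o i (toExp p) < Q) : Function.Injective (Ev a o ν t q) := by
  rw [← LinearMap.ker_eq_bot, LinearMap.ker_eq_bot']
  intro v hv
  by_contra hne
  have hS : (Finset.univ.filter (fun p => v p ≠ 0)).Nonempty := by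
    obtain ⟨p, hp⟩ := Function.ne_iff.1 hne
    exact ⟨p, by simpa using hp⟩
  obtain ⟨p, hp⟩ := Finset.exists_minimal hS
  have hp1 : v p ≠ 0 := by simpa using hp.1
  have h1 := congrFun hv p
  rw [Ev_apply, Finset.sum_eq_single p] at h1
  · rcases mul_eq_zero.1 h1 with h | h
    · unfold wt at h
      rw [if_pos rfl, Finset.prod_eq_zero_iff] at h
      obtain ⟨i, -, h⟩ := h
      rw [Finset.prod_eq_zero_iff] at h
      obtain ⟨b, hb, h⟩ := h
      rw [← mul_sub, mul_eq_zero, or_iff_right ht, sub_eq_zero] at h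
      have hb' := Finset.mem_range.1 hb
      have := hν _ (hq i p) b (hb'.trans (hq i p)) h
      omega
    · exact hp1 h
  · intro p' _ hne'
    by_contra h
    have h2 := left_ne_zero_of_mul h
    have h3 := right_ne_zero_of_mul h
    have h4 := wt_le a o ν t h2
    have h5 : p' ≤ p := fun i => by simpa using h4 i
    exact hne' (le_antisymm h5 (hp.2 (by simpa using h3) h5))
  · simp

noncomputable def Lam (q : ℕ) (lam : (σ → Fin q) → k) : Module.End k ((σ → Fin q) → k) :=
  LinearMap.pi (fun p => lam p • LinearMap.proj p)

lemma Ev_conj (q : ℕ) (ho : ∀ i j p, o j (p + a i) = o j p + if j = i then 1 else 0)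
    (v : (σ → Fin q) → k) (p : σ → Fin q) :
    Ev a o ν t q ((TF q (∑ i, monomial (a i) (1 : k)) + t • Lam q (fun p => ∑ i, ν (o i (toExp p))) :
      Module.End k ((σ → Fin q) → k)) v) p =
      t * (∑ i, ν (o i (toExp p))) * Ev a o ν t q v p := by
  have key : ((LinearMap.proj p).comp ((Ev a o ν t q).comp
      (TF q (∑ i, monomial (a i) (1 : k)) + t • Lam q (fun p => ∑ i, ν (o i (toExp p))) :
      Module.End k ((σ → Fin q) → k)))) =
      (t * (∑ i, ν (o i (toExp p)))) • (LinearMap.proj p).comp (Ev a o ν t q) := by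
    apply LinearMap.pi_ext'
    intro p'
    apply LinearMap.ext_ring
    have hb : bpi σ k q (monomial (toExp p') 1) = Pi.single p' 1 := by
      funext x
      simp only [bpi_apply, coeff_monomial, toExp_inj, Pi.single_apply]
    simp only [LinearMap.comp_apply, LinearMap.proj_apply, LinearMap.smul_apply, LinearMap.add_apply,
      LinearMap.single_apply, map_add, Pi.add_apply, map_smul, Pi.smul_apply, smul_eq_mul]
    have e1 : Ev a o ν t q (Pi.single p' 1) p = wt a o ν t (toExp p) (toExp p') := by
      rw [Ev_apply, Finset.sum_eq_single p']
      · simp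
      · intro x _ hx; simp [hx]
      · simp
    have e2 : Ev a o ν t q (Lam q (fun p => ∑ i, ν (o i (toExp p))) (Pi.single p' 1)) p =
        (∑ i, ν (o i (toExp p'))) * wt a o ν t (toExp p) (toExp p') := by
      rw [Ev_apply, Finset.sum_eq_single p']
      · simp [Lam, mul_comm]
      · intro x _ hx; simp [hx, Lam]
      · simp
    have e3 : Ev a o ν t q (TF q (∑ i, monomial (a i) 1) (Pi.single p' 1)) p =
        ∑ i, wt a o ν t (toExp p) (toExp p' + a i) := by
      rw [← hb, TF_bpi, Finset.sum_mul, map_sum, map_sum, Finset.sum_apply]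
      apply Finset.sum_congr rfl
      intro i _
      rw [monomial_mul_monomial, one_mul, Ev_apply, add_comm (a i)]
      simp only [bpi_apply, coeff_monomial, mul_ite, mul_one, mul_zero]
      by_cases hbx : ∀ j, (toExp p' + a i) j < q
      · obtain ⟨x, hx⟩ := exists_toExp _ hbx
        rw [← hx]
        simp only [toExp_inj]
        simp
      · have h0 : wt a o ν t (toExp p) (toExp p' + a i) = 0 := by
          by_contra h
          apply hbx
          intro j
          exact lt_of_le_of_lt (wt_le a o ν t h j) (p j).2
        rw [h0]
        apply Finset.sum_eq_zero
        intro x _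
        rw [if_neg]
        intro hx
        apply hbx
        intro j
        rw [← hx]; exact (x j).2
    rw [e1, e2, e3]
    simp only [wt_step a o ν t ho]
    rw [← Finset.mul_sum, Finset.sum_sub_distrib, ← Finset.mul_sum, ← Finset.mul_sum]
    ring
  have := LinearMap.congr_fun key v
  simpa using this

open Classical in
lemma count [Infinite k] (q : ℕ) (ho : ∀ i j p, o j (p + a i) = o j p + if j = i then 1 else 0)
    (Q : ℕ) (hν : ∀ x < Q, ∀ y < Q, ν x = ν y → x = y)
    (hq : ∀ i (p : σ → Fin q), o i (toExp p) < Q) :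
    (Finset.univ.filter (fun p : σ → Fin q => ∑ i, ν (o i (toExp p)) = 0)).card ≤
      HQ q (∑ i, monomial (a i) (1 : k)) := by
  have hf := rank_semicont (TF q (∑ i, monomial (a i) 1)) (Lam q (fun p => ∑ i, ν (o i (toExp p))))
  obtain ⟨t, ht⟩ := (hf.union (Set.finite_singleton 0)).infinite_compl.nonempty
  simp only [Set.mem_compl_iff, Set.mem_union, not_or, Set.mem_ofPred_eq, not_lt, Set.mem_singleton_iff] at ht
  obtain ⟨h1, ht0⟩ := ht
  have hinj := Ev_inj a o ν t q ht0 Q hν hq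
  have hsurj := LinearMap.surjective_of_injective hinj
  set T := TF q (∑ i, monomial (a i) (1 : k)) with hT
  set T' := T + t • Lam q (fun p => ∑ i, ν (o i (toExp p))) with hT'
  have h2 := LinearMap.finrank_range_add_finrank_ker T
  have h3 := LinearMap.finrank_range_add_finrank_ker T'
  rw [HQ_ker]
  have h4 : Module.finrank k (LinearMap.ker T') ≤ Module.finrank k (LinearMap.ker T) := by omega
  refine le_trans ?_ h4
  let R : LinearMap.ker T' →ₗ[k] ({p : σ → Fin q // ∑ i, ν (o i (toExp p)) = 0} → k) :=
    (LinearMap.funLeft k k (fun p : {p : σ → Fin q // ∑ i, ν (o i (toExp p)) = 0} => p.1)).comp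
      ((Ev a o ν t q).comp (LinearMap.ker T').subtype)
  have hR : Function.Surjective R := by
    intro g
    obtain ⟨v, hv⟩ := hsurj (fun p => if h : ∑ i, ν (o i (toExp p)) = 0 then g ⟨p, h⟩ else 0)
    refine ⟨⟨v, ?_⟩, ?_⟩
    · rw [LinearMap.mem_ker]
      apply hinj
      rw [map_zero]
      funext p
      rw [hT', hT, Ev_conj a o ν t q ho, hv]
      by_cases h : ∑ i, ν (o i (toExp p)) = 0
      · simp [h]
      · simp [h]
    · funext p
      change Ev a o ν t q v p.1 = g p
      rw [hv]
      simp [p.2]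
  have := LinearMap.finrank_le_finrank_of_surjective hR
  rw [Module.finrank_fintype_fun_eq_card, Fintype.card_subtype] at this
  convert this

end count
end HKdich


namespace HKdich
set_option linter.unusedSectionVars false

section nu

def beta (e : ℕ) (n : ℕ) : Fin e → ZMod 2 := fun b => ((n / 2 ^ (b : ℕ) : ℕ) : ZMod 2)

lemma bits_sum (e n : ℕ) : ∑ b ∈ Finset.range e, 2 ^ b * (n / 2 ^ b % 2) = n % 2 ^ e := by
  induction e with
  | zero => simp [Nat.mod_one]
  | succ e ih => rw [Finset.sum_range_succ, ih, Nat.mod_pow_succ]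

lemma beta_inj (e : ℕ) : ∀ x < 2 ^ e, ∀ y < 2 ^ e, beta e x = beta e y → x = y := by
  intro x hx y hy h
  rw [← Nat.mod_eq_of_lt hx, ← Nat.mod_eq_of_lt hy, ← bits_sum, ← bits_sum]
  apply Finset.sum_congr rfl
  intro b hb
  have := congrFun h ⟨b, Finset.mem_range.1 hb⟩
  simp only [beta] at this
  rw [ZMod.natCast_eq_natCast_iff'] at this
  rw [this]

lemma beta_surj (e : ℕ) (g : Fin e → ZMod 2) : ∃ n < 2 ^ e, beta e n = g := by
  have hinj : Function.Injective (fun x : Fin (2 ^ e) => beta e x) := by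
    intro x y h
    exact Fin.ext (beta_inj e x x.2 y y.2 h)
  have hb := (Fintype.bijective_iff_injective_and_card _).2 ⟨hinj, by simp [ZMod.card]⟩
  obtain ⟨x, hx⟩ := hb.2 g
  exact ⟨x, x.2, hx⟩

lemma exists_mu (k : Type*) [Field k] [Infinite k] [CharP k 2] (e : ℕ) :
    ∃ μ : (Fin e → ZMod 2) →+ k, Function.Injective μ := by
  let := ZMod.algebra k 2
  have hinf : ¬ Module.Finite (ZMod 2) k := by
    intro h
    have := Module.finite_of_finite (ZMod 2) (M := k)
    exact not_finite k
  have hr : (e : Cardinal) ≤ Module.rank (ZMod 2) k := by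
    by_contra h
    apply hinf
    rw [← Module.rank_lt_aleph0_iff]
    exact (not_le.1 h).trans (Cardinal.natCast_lt_aleph0)
  obtain ⟨f, hf⟩ := exists_linearIndependent_of_le_rank hr
  refine ⟨(Fintype.linearCombination (ZMod 2) f).toAddMonoidHom, ?_⟩
  exact hf.fintypeLinearCombination_injective

variable {σ : Type*} [Fintype σ] [DecidableEq σ] {k : Type*} [Field k]
variable {ι : Type*} [Fintype ι] [DecidableEq ι]

lemma count2 [Infinite k] [CharP k 2] (a : ι → σ →₀ ℕ) (o : ι → (σ →₀ ℕ) → ℕ) (q e : ℕ)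
    (ho : ∀ i j p, o j (p + a i) = o j p + if j = i then 1 else 0)
    (hq : ∀ i (p : σ → Fin q), o i (toExp p) < 2 ^ e) :
    (Finset.univ.filter (fun p : σ → Fin q => ∑ i, beta e (o i (toExp p)) = 0)).card ≤
      HQ q (∑ i, monomial (a i) (1 : k)) := by
  classical
  obtain ⟨μ, hμ⟩ := exists_mu k e
  refine le_trans (Finset.card_le_card ?_) (count a o (fun n => μ (beta e n)) q ho (2 ^ e)
    (fun x hx y hy h => beta_inj e x hx y hy (hμ h)) hq)
  intro p hp
  simp only [Finset.mem_filter, Finset.mem_univ, true_and] at hp ⊢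
  rw [← map_sum, hp, map_zero]

end nu

section conv

def sgn (x : ZMod 2) : ℤ := if x = 0 then 1 else -1

lemma sgn_add (x y : ZMod 2) : sgn (x + y) = sgn x * sgn y := by
  revert x y; decide

variable {e : ℕ}

lemma sum_flip (f : (Fin e → ZMod 2) → ℤ) (δ : Fin e → ZMod 2) (h : ∀ g, f (g + δ) = - f g) :
    ∑ g, f g = 0 := by
  have h1 := Equiv.sum_comp (Equiv.addRight δ) f
  simp only [Equiv.coe_addRight, h, Finset.sum_neg_distrib] at h1
  omega

lemma sum_chi (b : Fin e) : ∑ g : Fin e → ZMod 2, sgn (g b) = 0 := by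
  apply sum_flip _ (Pi.single b 1)
  intro g
  simp only [Pi.add_apply, Pi.single_eq_same, sgn_add]
  simp [sgn]

lemma sum_chi_mul (b b' : Fin e) (h : b ≠ b') :
    ∑ g : Fin e → ZMod 2, sgn (g b) * sgn (g b') = 0 := by
  apply sum_flip _ (Pi.single b 1)
  intro g
  simp only [Pi.add_apply, Pi.single_eq_same, sgn_add, Pi.single_eq_of_ne h.symm]
  have s1 : sgn 1 = -1 := by decide
  have s0 : sgn 0 = 1 := by decide
  rw [s1, s0]; ring

lemma sgn_sq (x : ZMod 2) : sgn x * sgn x = 1 := by revert x; decide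

variable {X : Type*} [Fintype X] [DecidableEq X]

def NN (s : X → Fin e → ZMod 2) (r : ℕ) (g : Fin e → ZMod 2) : ℕ :=
  (Finset.univ.filter (fun x : Fin r → X => ∑ i, s (x i) = g)).card

lemma NN_succ (s : X → Fin e → ZMod 2) (r : ℕ) (g : Fin e → ZMod 2) :
    NN s (r + 1) g = ∑ x, NN s r (g - s x) := by
  unfold NN
  rw [← Finset.card_sigma]
  symm
  apply Finset.card_bij (fun (y : (_ : X) × (Fin r → X)) _ => (Fin.cons y.1 y.2 : Fin (r+1) → X))
  · rintro ⟨x, y⟩ h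
    simp only [Finset.mem_sigma, Finset.mem_univ, Finset.mem_filter, true_and] at h ⊢
    rw [Fin.sum_univ_succ]
    simp [h]
  · rintro ⟨x, y⟩ _ ⟨x', y'⟩ _ h
    have := Fin.cons_injective2 h
    obtain ⟨rfl, rfl⟩ := this
    rfl
  · intro z hz
    refine ⟨⟨z 0, Fin.tail z⟩, ?_, Fin.cons_self_tail z⟩
    simp only [Finset.mem_sigma, Finset.mem_univ, Finset.mem_filter, true_and] at hz ⊢
    rw [Fin.sum_univ_succ] at hz
    rw [← hz]
    simp [Fin.tail]

lemma conv_sum (s : X → Fin e → ZMod 2) (f : (Fin e → ZMod 2) → ℤ) :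
    ∑ x, f (s x) = ∑ h, (NN s 1 h : ℤ) * f h := by
  have h1 : ∀ h, (NN s 1 h : ℤ) = ∑ x, if s x = h then 1 else 0 := by
    intro h
    rw [Finset.sum_boole, NN]
    congr 1
    apply Finset.card_bij (fun y _ => y 0)
    · intro y hy; simpa using hy
    · intro y _ y' _ h
      funext i; rw [Subsingleton.elim i 0]; exact h
    · intro x hx
      exact ⟨fun _ => x, by simpa using hx, rfl⟩
  simp only [h1, Finset.sum_mul]
  rw [Finset.sum_comm]
  simp

lemma NN_formula (s : X → Fin e → ZMod 2) (a : ℤ) (c : Fin e → ℤ)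
    (h1 : ∀ g, 2 ^ e * (NN s 1 g : ℤ) = a + ∑ b, c b * sgn (g b)) (r : ℕ) (g : Fin e → ZMod 2) :
    2 ^ e * (NN s (r + 1) g : ℤ) = a ^ (r + 1) + ∑ b, c b ^ (r + 1) * sgn (g b) := by
  induction r generalizing g with
  | zero => simpa using h1 g
  | succ r ih =>
    have hneg : ∀ h : Fin e → ZMod 2, g - h = g + h := fun h => by
      funext i; exact CharTwo.sub_eq_add _ _
    have hcard : (∑ h : Fin e → ZMod 2, (1 : ℤ)) = 2 ^ e := by simp [ZMod.card]
    have key : (2 : ℤ) ^ e * (2 ^ e * (NN s (r + 1 + 1) g : ℤ)) =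
        2 ^ e * (a ^ (r + 1 + 1) + ∑ b, c b ^ (r + 1 + 1) * sgn (g b)) := by
      rw [NN_succ, Nat.cast_sum, conv_sum s (fun x => (NN s (r+1) (g - x) : ℤ)), Finset.mul_sum, Finset.mul_sum]
      have e1 : ∀ h : Fin e → ZMod 2, (2 : ℤ) ^ e * (2 ^ e * (↑(NN s 1 h) * ↑(NN s (r + 1) (g - h)))) =
          (a + ∑ b, c b * sgn (h b)) * (a ^ (r + 1) + ∑ b, c b ^ (r + 1) * sgn (g b) * sgn (h b)) := by
        intro h
        have := ih (g - h)
        rw [hneg] at this ⊢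
        simp only [Pi.add_apply, sgn_add, ← mul_assoc] at this
        rw [← h1, ← this]; ring
      simp only [e1, add_mul, mul_add, Finset.sum_add_distrib]
      have t1 : ∑ h : Fin e → ZMod 2, a * a ^ (r + 1) = 2 ^ e * a ^ (r + 1 + 1) := by
        rw [← hcard, Finset.sum_mul]
        apply Finset.sum_congr rfl; intro _ _; ring
      have t2 : ∑ h : Fin e → ZMod 2, (∑ b, c b * sgn (h b)) * a ^ (r + 1) = 0 := by
        simp only [Finset.sum_mul]
        rw [Finset.sum_comm]
        apply Finset.sum_eq_zero
        intro b _
        rw [← Finset.sum_mul, ← Finset.mul_sum, sum_chi, mul_zero, zero_mul]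
      have t3 : ∑ h : Fin e → ZMod 2, a * (∑ b, c b ^ (r + 1) * sgn (g b) * sgn (h b)) = 0 := by
        rw [← Finset.mul_sum, Finset.sum_comm]
        rw [Finset.sum_eq_zero, mul_zero]
        intro b _
        rw [← Finset.mul_sum, sum_chi, mul_zero]
      have t4 : ∑ h : Fin e → ZMod 2, (∑ b, c b * sgn (h b)) * (∑ b, c b ^ (r + 1) * sgn (g b) * sgn (h b)) =
          2 ^ e * ∑ b, c b ^ (r + 1 + 1) * sgn (g b) := by
        simp only [Finset.sum_mul_sum]
        rw [Finset.sum_comm, Finset.mul_sum]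
        apply Finset.sum_congr rfl
        intro b _
        rw [Finset.sum_comm, Finset.sum_eq_single b]
        · have : ∀ h : Fin e → ZMod 2, c b * sgn (h b) * (c b ^ (r + 1) * sgn (g b) * sgn (h b)) =
              c b ^ (r + 1 + 1) * sgn (g b) := by
            intro h
            have := sgn_sq (h b)
            linear_combination (c b ^ (r + 2) * sgn (g b)) * this
          simp only [this]
          rw [← hcard, Finset.sum_mul]
          apply Finset.sum_congr rfl; intro _ _; ring
        · intro b' _ hb
          have : ∀ h : Fin e → ZMod 2, c b * sgn (h b) * (c b' ^ (r + 1) * sgn (g b') * sgn (h b')) =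
              (c b * c b' ^ (r + 1) * sgn (g b')) * (sgn (h b) * sgn (h b')) := by
            intro h; ring
          simp only [this]
          rw [← Finset.mul_sum, sum_chi_mul b b' hb.symm, mul_zero]
        · simp
      rw [t1, t2, t3, t4]
      ring
    exact mul_left_cancel₀ (by positivity) key

end conv
end HKdich


namespace HKdich
set_option linter.unusedSectionVars false

section cnt

lemma NN_one {e : ℕ} {X : Type*} [Fintype X] [DecidableEq X] (s : X → Fin e → ZMod 2) (g : Fin e → ZMod 2) :
    NN s 1 g = (Finset.univ.filter (fun x => s x = g)).card := by
  rw [NN]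
  apply Finset.card_bij (fun y _ => y 0)
  · intro y hy; simpa using hy
  · intro y _ y' _ h
    funext i; rw [Subsingleton.elim i 0]; exact h
  · intro x hx
    exact ⟨fun _ => x, by simpa using hx, rfl⟩

lemma card_ge (q n : ℕ) :
    (Finset.univ.filter (fun x : Fin q × Fin q => n ≤ min (x.1 : ℕ) x.2)).card = (q - n) ^ 2 := by
  have h1 : (Finset.univ.filter (fun x : Fin q × Fin q => n ≤ min (x.1 : ℕ) x.2)) =
      (Finset.univ.filter (fun x : Fin q => n ≤ (x : ℕ))) ×ˢ (Finset.univ.filter (fun x : Fin q => n ≤ (x : ℕ))) := by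
    ext x
    simp [Finset.mem_product]
  have h2 : (Finset.univ.filter (fun x : Fin q => n ≤ (x : ℕ))).card = q - n := by
    have h3 : (Finset.univ.filter (fun x : Fin q => n ≤ (x : ℕ))).card = (Finset.Ico n q).card := by
      apply Finset.card_bij (fun (x : Fin q) _ => (x : ℕ))
      · intro x hx
        simp at hx ⊢; exact hx
      · intro x _ y _ h; exact Fin.ext h
      · intro y hy
        rw [Finset.mem_Ico] at hy
        exact ⟨⟨y, hy.2⟩, by simpa using hy.1, rfl⟩
    rw [h3, Nat.card_Ico]
  rw [h1, Finset.card_product, h2, pow_two]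

lemma card_eq (q n : ℕ) :
    (Finset.univ.filter (fun x : Fin q × Fin q => min (x.1 : ℕ) x.2 = n)).card + (q - (n + 1)) ^ 2 = (q - n) ^ 2 := by
  rw [← card_ge, ← card_ge, ← Finset.card_union_of_disjoint]
  · congr 1
    ext x
    simp only [Finset.mem_union, Finset.mem_filter, Finset.mem_univ, true_and]
    omega
  · rw [Finset.disjoint_left]
    intro x
    simp only [Finset.mem_filter, Finset.mem_univ, true_and]
    omega

lemma sgn_cast (n : ℕ) : sgn (n : ZMod 2) = 1 - 2 * ((n % 2 : ℕ) : ℤ) := by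
  have : (n : ZMod 2) = ((n % 2 : ℕ) : ZMod 2) := by simp
  rw [this]
  rcases Nat.mod_two_eq_zero_or_one n with h | h <;> rw [h] <;> decide

lemma sum_two_pow (e : ℕ) : (∑ b ∈ Finset.range e, (2 : ℤ) ^ b) = 2 ^ e - 1 := by
  induction e with
  | zero => simp
  | succ e ih => rw [Finset.sum_range_succ, ih]; ring

lemma sum_sgn_beta (e n : ℕ) (hn : n < 2 ^ e) :
    ∑ b : Fin e, (2 : ℤ) ^ (b : ℕ) * sgn (beta e n b) = 2 ^ e - 1 - 2 * n := by
  simp only [beta, sgn_cast]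
  rw [Fin.sum_univ_eq_sum_range (fun b => (2 : ℤ) ^ b * (1 - 2 * ((n / 2 ^ b % 2 : ℕ) : ℤ))) e]
  simp only [mul_sub, mul_one, Finset.sum_sub_distrib, sum_two_pow]
  have h := bits_sum e n
  rw [Nat.mod_eq_of_lt hn] at h
  have h2 : (n : ℤ) = ∑ b ∈ Finset.range e, (2 : ℤ) ^ b * ((n / 2 ^ b % 2 : ℕ) : ℤ) := by
    conv_lhs => rw [← h]
    push_cast; rfl
  conv_rhs => rw [h2, Finset.mul_sum]
  congr 1
  apply Finset.sum_congr rfl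
  intro b _; ring

def sE (e : ℕ) (x : Fin (2 ^ e) × Fin (2 ^ e)) : Fin e → ZMod 2 := beta e (min (x.1 : ℕ) x.2)

lemma NN_even_one (e : ℕ) (g : Fin e → ZMod 2) :
    2 ^ e * (NN (sE e) 1 g : ℤ) = (2 ^ e) ^ 2 + ∑ b : Fin e, (2 ^ e * 2 ^ (b : ℕ)) * sgn (g b) := by
  obtain ⟨n, hn, rfl⟩ := beta_surj e g
  rw [NN_one]
  have h1 : (Finset.univ.filter (fun x => sE e x = beta e n)) =
      (Finset.univ.filter (fun x : Fin (2 ^ e) × Fin (2 ^ e) => min (x.1 : ℕ) x.2 = n)) := by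
    ext x
    simp only [Finset.mem_filter, Finset.mem_univ, true_and]
    constructor
    · intro h
      exact beta_inj e _ (by have := x.1.2; omega) _ hn h
    · intro h; unfold sE; rw [h]
  rw [h1]
  have h2 := card_eq (2 ^ e) n
  obtain ⟨y, hy⟩ : ∃ y, 2 ^ e = n + 1 + y := ⟨2 ^ e - (n + 1), by omega⟩
  have h3 : 2 ^ e - (n + 1) = y := by omega
  have h4 : 2 ^ e - n = y + 1 := by omega
  rw [h3, h4] at h2
  simp only [mul_assoc]
  rw [← Finset.mul_sum, sum_sgn_beta e n hn]
  have h5 : ((Finset.univ.filter (fun x : Fin (2 ^ e) × Fin (2 ^ e) => min (x.1 : ℕ) x.2 = n)).card : ℤ) + y ^ 2 = (y + 1) ^ 2 := by exact_mod_cast h2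
  have h6 : (2 : ℤ) ^ e = n + 1 + y := by exact_mod_cast hy
  rw [h6]
  linear_combination ((n : ℤ) + 1 + y) * h5

def sO (e : ℕ) (x : Fin (2 ^ (e+1)) × Fin (2 ^ (e+1))) : Fin 1 → ZMod 2 := beta 1 (min (x.1 : ℕ) x.2 / 2 ^ e)

lemma NN_odd_one (e : ℕ) (g : Fin 1 → ZMod 2) :
    2 ^ 1 * (NN (sO e) 1 g : ℤ) = (2 ^ (e+1)) ^ 2 + ∑ b : Fin 1, (2 * (2 ^ e) ^ 2) * sgn (g b) := by
  obtain ⟨n, hn, rfl⟩ := beta_surj 1 g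
  rw [NN_one]
  have hlt : ∀ x : Fin (2 ^ (e+1)) × Fin (2 ^ (e+1)), min (x.1 : ℕ) x.2 / 2 ^ e < 2 ^ 1 := by
    intro x
    rw [Nat.div_lt_iff_lt_mul (by positivity), ← pow_add, add_comm 1 e]
    have := x.1.2; omega
  have h1 : (Finset.univ.filter (fun x => sO e x = beta 1 n)) =
      (Finset.univ.filter (fun x : Fin (2 ^ (e+1)) × Fin (2 ^ (e+1)) => min (x.1 : ℕ) x.2 / 2 ^ e = n)) := by
    ext x
    simp only [Finset.mem_filter, Finset.mem_univ, true_and]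
    constructor
    · intro h
      exact beta_inj 1 _ (hlt x) _ hn h
    · intro h; unfold sO; rw [h]
  have h2 := card_ge (2 ^ (e+1)) (2 ^ e)
  have h2' : 2 ^ (e+1) - 2 ^ e = 2 ^ e := by rw [pow_succ]; omega
  rw [h2'] at h2
  have h3 : (Finset.univ.filter (fun x : Fin (2 ^ (e+1)) × Fin (2 ^ (e+1)) => min (x.1 : ℕ) x.2 / 2 ^ e = 1)).card = (2 ^ e) ^ 2 := by
    rw [← h2]
    congr 1
    ext x
    simp only [Finset.mem_filter, Finset.mem_univ, true_and]
    have := hlt x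
    have h5 : 2 ^ e ≤ min (x.1 : ℕ) x.2 ↔ 1 ≤ min (x.1 : ℕ) x.2 / 2 ^ e := by
      rw [Nat.le_div_iff_mul_le (by positivity), one_mul]
    rw [h5]; omega
  have h4 : (Finset.univ.filter (fun x : Fin (2 ^ (e+1)) × Fin (2 ^ (e+1)) => min (x.1 : ℕ) x.2 / 2 ^ e = 0)).card + (2 ^ e) ^ 2 = (2 ^ (e+1)) ^ 2 := by
    rw [← h3, ← Finset.card_union_of_disjoint]
    · have : (Finset.univ.filter (fun x : Fin (2 ^ (e+1)) × Fin (2 ^ (e+1)) => min (x.1 : ℕ) x.2 / 2 ^ e = 0)) ∪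
          (Finset.univ.filter (fun x : Fin (2 ^ (e+1)) × Fin (2 ^ (e+1)) => min (x.1 : ℕ) x.2 / 2 ^ e = 1)) = Finset.univ := by
        ext x
        simp only [Finset.mem_union, Finset.mem_filter, Finset.mem_univ, true_and, iff_true]
        have := hlt x
        generalize min (x.1 : ℕ) x.2 / 2 ^ e = y at this ⊢
        omega
      rw [this]
      simp [pow_two]
    · rw [Finset.disjoint_left]
      intro x
      simp only [Finset.mem_filter, Finset.mem_univ, true_and]
      omega
  rw [h1]
  have hb : beta 1 n 0 = (n : ZMod 2) := by simp [beta]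
  rw [Fin.sum_univ_one, hb]
  have hn' : n = 0 ∨ n = 1 := by omega
  rcases hn' with rfl | rfl
  · have s0 : sgn ((0 : ℕ) : ZMod 2) = 1 := by decide
    rw [s0]
    have h5 : ((Finset.univ.filter (fun x : Fin (2 ^ (e+1)) × Fin (2 ^ (e+1)) => min (x.1 : ℕ) x.2 / 2 ^ e = 0)).card : ℤ) + (2 ^ e) ^ 2 = (2 ^ (e+1)) ^ 2 := by exact_mod_cast h4
    have h6 : (2 : ℤ) ^ (e+1) = 2 * 2 ^ e := by ring
    rw [h6] at h5 ⊢
    linear_combination 2 * h5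
  · have s0 : sgn ((1 : ℕ) : ZMod 2) = -1 := by decide
    rw [s0, h3]
    push_cast
    ring

lemma sum_block (f : ℕ → ℤ) (B M : ℕ) (hB : 0 < B) :
    ∑ x ∈ Finset.range (B * M), f (x / B) = B * ∑ y ∈ Finset.range M, f y := by
  induction M with
  | zero => simp
  | succ M ih =>
    rw [Nat.mul_succ, Finset.sum_range_add, ih, Finset.sum_range_succ, mul_add]
    congr 1
    rw [Finset.sum_congr rfl (g := fun _ => f M)]
    · simp
    · intro x hx
      rw [Nat.mul_add_div hB, Nat.div_eq_of_lt (Finset.mem_range.1 hx), add_zero]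

lemma sum_third (n : ℕ) : ∑ y ∈ Finset.range n, sgn ((y / 3 : ℕ) : ZMod 2) =
    if n % 6 ≤ 3 then ((n % 6 : ℕ) : ℤ) else 6 - ((n % 6 : ℕ) : ℤ) := by
  induction n with
  | zero => simp
  | succ n ih =>
    rw [Finset.sum_range_succ, ih, sgn_cast]
    split_ifs <;> omega

lemma two_pow_mod (j : ℕ) : 2 ^ (j+1) % 6 = 2 ∨ 2 ^ (j+1) % 6 = 4 := by
  induction j with
  | zero => simp
  | succ j ih => rw [pow_succ]; omega

lemma sum_chi_third (e : ℕ) (b : Fin e) :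
    ∑ γ : Fin (2 ^ e), sgn (beta e ((γ : ℕ) / 3) b) = 2 ^ ((b : ℕ) + 1) := by
  simp only [beta]
  rw [Fin.sum_univ_eq_sum_range (fun γ => sgn ((γ / 3 / 2 ^ (b : ℕ) : ℕ) : ZMod 2)) (2 ^ e)]
  have h1 : ∀ γ, γ / 3 / 2 ^ (b : ℕ) = γ / 2 ^ (b : ℕ) / 3 := fun γ => by
    rw [Nat.div_div_eq_div_mul, Nat.div_div_eq_div_mul, mul_comm]
  simp only [h1]
  obtain ⟨j, hj⟩ : ∃ j, e = (b : ℕ) + (j + 1) := ⟨e - b - 1, by have := b.2; omega⟩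
  have h2 : 2 ^ e = 2 ^ (b : ℕ) * 2 ^ (j + 1) := by rw [← pow_add, ← hj]
  rw [h2, sum_block (fun y => sgn ((y / 3 : ℕ) : ZMod 2)) _ _ (by positivity), sum_third]
  rw [pow_succ 2 (b : ℕ), Nat.cast_pow, Nat.cast_two]
  congr 1
  rcases two_pow_mod j with h | h <;> rw [h] <;> norm_num

/-- the even count -/
lemma even_count (e m : ℕ) (hm : 1 ≤ m) :
    2 ^ e * ((∑ γ : Fin (2 ^ e), NN (sE e) m (beta e ((γ : ℕ) / 3)) : ℕ) : ℤ) =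
      2 ^ e * ((2 ^ e) ^ 2) ^ m + ∑ b ∈ Finset.range e, (2 ^ e * 2 ^ b) ^ m * 2 ^ (b + 1) := by
  obtain ⟨r, rfl⟩ : ∃ r, m = r + 1 := ⟨m - 1, by omega⟩
  push_cast
  rw [Finset.mul_sum]
  simp only [NN_formula (sE e) _ _ (NN_even_one e) r, Finset.sum_add_distrib]
  congr 1
  · simp
  · rw [Finset.sum_comm, ← Fin.sum_univ_eq_sum_range (fun b => ((2 : ℤ) ^ e * 2 ^ b) ^ (r + 1) * 2 ^ (b + 1)) e]
    apply Finset.sum_congr rfl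
    intro b _
    rw [← Finset.mul_sum, sum_chi_third]

lemma odd_count (e r : ℕ) (hr : 1 ≤ r) :
    2 * (NN (sO e) r 0 : ℤ) = ((2 ^ (e+1)) ^ 2) ^ r + (2 * (2 ^ e) ^ 2) ^ r := by
  obtain ⟨r, rfl⟩ : ∃ r', r = r' + 1 := ⟨r - 1, by omega⟩
  have := NN_formula (sO e) _ _ (NN_odd_one e) r 0
  rw [Fin.sum_univ_one] at this
  have s0 : sgn ((0 : Fin 1 → ZMod 2) 0) = 1 := by decide
  rw [s0, mul_one, pow_one] at this
  exact this

end cnt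
end HKdich


namespace HKdich
set_option linter.unusedSectionVars false

section transfer

def emb (d r c q : ℕ) (h : d + 1 = 2 * r + c) (x : Fin r → Fin q × Fin q) (y : Fin c → Fin q)
    (j : Fin (d+1)) : Fin q :=
  if hj : (j : ℕ) < 2 * r then
    (if (j : ℕ) % 2 = 0 then (x ⟨j / 2, by omega⟩).1 else (x ⟨j / 2, by omega⟩).2)
  else y ⟨j - 2 * r, by omega⟩

variable (d r c q : ℕ) (h : d + 1 = 2 * r + c) (x : Fin r → Fin q × Fin q) (y : Fin c → Fin q)

lemma emb_a (hr : 2 * r ≤ d + 1) (i : Fin r) : emb d r c q h x y (aF d r hr i) = (x i).1 := by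
  have h1 : ((aF d r hr i : Fin (d+1)) : ℕ) = 2 * i := rfl
  unfold emb
  rw [dif_pos (by rw [h1]; omega), if_pos (by rw [h1]; omega)]
  congr 2
  apply Fin.ext
  simp only [h1]; omega

lemma emb_b (hr : 2 * r ≤ d + 1) (i : Fin r) : emb d r c q h x y (bF d r hr i) = (x i).2 := by
  have h1 : ((bF d r hr i : Fin (d+1)) : ℕ) = 2 * i + 1 := rfl
  unfold emb
  rw [dif_pos (by rw [h1]; omega), if_neg (by rw [h1]; omega)]
  congr 2
  apply Fin.ext
  simp only [h1]; omega

lemma emb_y (l : Fin c) : emb d r c q h x y ⟨2 * r + l, by omega⟩ = y l := by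
  unfold emb
  rw [dif_neg (by simp)]
  congr 1
  apply Fin.ext
  simp

lemma emb_inj {x x' : Fin r → Fin q × Fin q} {y y' : Fin c → Fin q}
    (he : emb d r c q h x y = emb d r c q h x' y') : x = x' ∧ y = y' := by
  have hr : 2 * r ≤ d + 1 := by omega
  constructor
  · funext i
    apply Prod.ext
    · rw [← emb_a d r c q h x y hr i, he, emb_a]
    · rw [← emb_b d r c q h x y hr i, he, emb_b]
  · funext l
    rw [← emb_y d r c q h x y l, he, emb_y]

lemma pe_step (hr : 2 * r ≤ d + 1) (n : ℕ) (hn : 0 < n) (i j : Fin r) (p : Fin (d+1) →₀ ℕ) :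
    min ((p + (Finsupp.single (aF d r hr i) n + Finsupp.single (bF d r hr i) n)) (aF d r hr j))
      ((p + (Finsupp.single (aF d r hr i) n + Finsupp.single (bF d r hr i) n)) (bF d r hr j)) / n =
    min (p (aF d r hr j)) (p (bF d r hr j)) / n + if j = i then 1 else 0 := by
  have e1 : bF d r hr i ≠ aF d r hr j := fun h => aF_ne_bF d r hr j i h.symm
  have e2 : aF d r hr i ≠ bF d r hr j := aF_ne_bF d r hr i j
  simp only [Finsupp.add_apply, Finsupp.single_apply, (aF_inj d r hr).eq_iff, (bF_inj d r hr).eq_iff, e1, e2, if_false,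
    add_zero, zero_add]
  by_cases hij : i = j
  · subst hij
    simp only [if_true]
    rw [Nat.add_min_add_right, Nat.add_div_right _ hn]
  · simp [hij, Ne.symm hij]

end transfer

section transfer2
variable {k : Type*} [Field k] [Infinite k] [CharP k 2]

lemma even_HQ (m e : ℕ) (hr : 2 * m ≤ 2 * m + 1) :
    ∑ γ : Fin (2 ^ e), NN (sE e) m (beta e ((γ : ℕ) / 3)) ≤
      HQ (2 ^ e) (hyp k (aF (2*m) m hr) (bF (2*m) m hr) + X ⟨2 * m, by omega⟩ ^ 3) := by
  set a : Option (Fin m) → (Fin (2*m+1) →₀ ℕ) := fun i => i.elim (Finsupp.single ⟨2*m, by omega⟩ 3)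
    (fun i => Finsupp.single (aF (2*m) m hr i) 1 + Finsupp.single (bF (2*m) m hr i) 1) with ha
  set o : Option (Fin m) → (Fin (2*m+1) →₀ ℕ) → ℕ := fun i p => i.elim (p ⟨2*m, by omega⟩ / 3)
    (fun i => min (p (aF (2*m) m hr i)) (p (bF (2*m) m hr i))) with ho
  have hF : hyp k (aF (2*m) m hr) (bF (2*m) m hr) + X ⟨2 * m, by omega⟩ ^ 3 = ∑ i, monomial (a i) (1 : k) := by
    rw [Fintype.sum_option, add_comm (hyp k _ _), hyp]
    congr 1
    · rw [X_pow_eq]; rfl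
    · apply Finset.sum_congr rfl
      intro i _
      simp only [X, monomial_mul_monomial, one_mul]; rfl
  have h1 := count2 (k := k) a o (2 ^ e) e (by
    intro i j p
    rcases i with _ | i <;> rcases j with _ | j
    · simp [ho, ha]
    · have n1 : (⟨2 * m, by omega⟩ : Fin (2*m+1)) ≠ aF (2*m) m hr j := by
        intro h; have := congrArg Fin.val h; simp [aF] at this; omega
      have n2 : (⟨2 * m, by omega⟩ : Fin (2*m+1)) ≠ bF (2*m) m hr j := by
        intro h; have := congrArg Fin.val h; simp [bF] at this; omega
      simp [ho, ha, Finsupp.single_apply, n1, n2]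
    · have n1 : aF (2*m) m hr i ≠ (⟨2 * m, by omega⟩ : Fin (2*m+1)) := by
        intro h; have := congrArg Fin.val h; simp [aF] at this; omega
      have n2 : bF (2*m) m hr i ≠ (⟨2 * m, by omega⟩ : Fin (2*m+1)) := by
        intro h; have := congrArg Fin.val h; simp [bF] at this; omega
      simp [ho, ha, Finsupp.single_apply, n1, n2]
    · have := pe_step (2*m) m hr 1 one_pos i j p
      simp only [Nat.div_one] at this
      simpa [ho, ha] using this) (by
    intro i p
    rcases i with _ | i
    · have := (p ⟨2*m, by omega⟩).2
      simp [ho]; omega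
    · have := (p (aF (2*m) m hr i)).2
      simp [ho])
  rw [← hF] at h1
  refine le_trans ?_ h1
  unfold NN
  rw [← Finset.card_sigma]
  apply Finset.card_le_card_of_injOn (fun (z : (_ : Fin (2^e)) × (Fin m → Fin (2^e) × Fin (2^e))) =>
    emb (2*m) m 1 (2^e) rfl z.2 (fun _ => z.1))
  · rintro ⟨γ, x⟩ hz
    simp only [Finset.coe_sigma, Finset.coe_filter, Set.mem_sigma_iff, Finset.mem_univ, Set.mem_ofPred_eq, true_and, Finset.coe_univ, Set.mem_univ] at hz ⊢
    rw [Fintype.sum_option]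
    have t1 : o none (toExp (emb (2*m) m 1 (2^e) rfl x (fun _ => γ))) = (γ : ℕ) / 3 := by
      have := emb_y (2*m) m 1 (2^e) rfl x (fun _ => γ) 0
      simp only [Fin.val_zero, add_zero] at this
      simp only [ho, Option.elim, toExp_apply, this]
    have t2 : ∀ i, o (some i) (toExp (emb (2*m) m 1 (2^e) rfl x (fun _ => γ))) = min ((x i).1 : ℕ) (x i).2 := by
      intro i
      simp only [ho, Option.elim, toExp_apply, emb_a, emb_b]
    rw [t1]
    simp only [t2]
    change _ + ∑ i, sE e (x i) = 0
    rw [hz]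
    funext b
    exact CharTwo.add_self_eq_zero (beta e ((γ : ℕ) / 3) b)
  · rintro ⟨γ, x⟩ _ ⟨γ', x'⟩ _ he
    obtain ⟨h1, h2⟩ := emb_inj _ _ _ _ _ he
    have h3 := congrFun h2 0
    simp only at h1 h3
    subst h1; subst h3; rfl

lemma odd_HQ (r e : ℕ) (hr : 2 * r ≤ 2 * r + 1 + 1) :
    (2 ^ (e+1)) ^ 2 * NN (sO e) r 0 ≤
      HQ (2 ^ (e+1)) (∑ i, (X (aF (2*r+1) r hr i) * X (bF (2*r+1) r hr i) : MvPowerSeries (Fin (2*r+1+1)) k) ^ 2 ^ e) := by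
  set a : Fin r → (Fin (2*r+1+1) →₀ ℕ) := 
    (fun i => Finsupp.single (aF (2*r+1) r hr i) (2^e) + Finsupp.single (bF (2*r+1) r hr i) (2^e)) with ha
  set o : Fin r → (Fin (2*r+1+1) →₀ ℕ) → ℕ := fun i p =>
    min (p (aF (2*r+1) r hr i)) (p (bF (2*r+1) r hr i)) / 2 ^ e with ho
  have hF : (∑ i, (X (aF (2*r+1) r hr i) * X (bF (2*r+1) r hr i) : MvPowerSeries (Fin (2*r+1+1)) k) ^ 2 ^ e) = ∑ i, monomial (a i) (1 : k) := by
    apply Finset.sum_congr rfl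
    intro i _
    simp only [mul_pow, X_pow_eq, monomial_mul_monomial, one_mul]; rfl
  have h1 := count2 (k := k) a o (2 ^ (e+1)) 1 (by
    intro i j p
    exact pe_step (2*r+1) r hr (2^e) (by positivity) i j p) (by
    intro i p
    have := (p (aF (2*r+1) r hr i)).2
    simp only [ho, toExp_apply]
    rw [Nat.div_lt_iff_lt_mul (by positivity), ← pow_add, add_comm 1 e]
    omega)
  rw [← hF] at h1
  refine le_trans ?_ h1
  have hc : (2 ^ (e+1)) ^ 2 * NN (sO e) r 0 = ((Finset.univ : Finset (Fin 2 → Fin (2^(e+1)))) ×ˢ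
      (Finset.univ.filter (fun x : Fin r → Fin (2^(e+1)) × Fin (2^(e+1)) => ∑ i, sO e (x i) = 0))).card := by
    rw [Finset.card_product]; simp [NN]
  rw [hc]
  apply Finset.card_le_card_of_injOn (fun (z : (Fin 2 → Fin (2^(e+1))) × (Fin r → Fin (2^(e+1)) × Fin (2^(e+1)))) =>
    emb (2*r+1) r 2 (2^(e+1)) rfl z.2 z.1)
  · rintro ⟨γ, x⟩ hz
    simp only [Finset.coe_product, Finset.coe_filter, Set.mem_prod, Finset.mem_univ, Set.mem_ofPred_eq, true_and, Finset.coe_univ, Set.mem_univ] at hz ⊢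
    have t2 : ∀ i, o i (toExp (emb (2*r+1) r 2 (2^(e+1)) rfl x γ)) = min ((x i).1 : ℕ) (x i).2 / 2 ^ e := by
      intro i
      simp only [ho, toExp_apply, emb_a, emb_b]
    simp only [t2]
    exact hz
  · rintro ⟨γ, x⟩ _ ⟨γ', x'⟩ _ he
    obtain ⟨h1, h2⟩ := emb_inj _ _ _ _ _ he
    simp only at h1 h2
    subst h1; subst h2; rfl

end transfer2
end HKdich


namespace HKdich
set_option linter.unusedSectionVars false

section cases
variable {k : Type*} [Field k] [IsAlgClosed k] [CharP k 2]

lemma free_X_pow (d r n : ℕ) (hr : 2 * r ≤ d + 1) (h : 2 * r < d + 1) (ε : k) :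
    Free (pairS (aF d r hr) (bF d r hr)) (C ε * X (⟨2 * r, h⟩ : Fin (d+1)) ^ n : MvPowerSeries (Fin (d+1)) k) := by
  intro p j hj hp
  rw [mem_pairF] at hj
  rw [coeff_C_mul, coeff_X_pow, if_neg, mul_zero]
  rintro rfl
  rw [Finsupp.single_apply, if_neg] at hp
  · exact hp rfl
  · rintro rfl; simp at hj

lemma free_sqT (d r : ℕ) (hr : 2 * r ≤ d + 1) (ε : k) :
    Free (pairS (aF d r hr) (bF d r hr)) (sqT d r ε) := by
  by_cases h2 : 2 * r < d + 1
  · rw [sqT_eq d r ε h2]; exact free_X_pow d r 2 hr h2 ε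
  · rw [sqT_eq_zero d r ε (by omega)]; intro p _ _ _; simp

/-- a series in the last variable only -/
lemma last_var (m n : ℕ) (hr : 2 * m ≤ 2 * m + 1) (c : MvPowerSeries (Fin (2*m+1)) k)
    (hc : Free (pairS (aF (2*m) m hr) (bF (2*m) m hr)) c) (hJ : c ∈ J _ k n)
    (hne : coeff (Finsupp.single ⟨2*m, by omega⟩ n) c ≠ 0) :
    Rel (hyp k (aF (2*m) m hr) (bF (2*m) m hr) + c)
      (hyp k (aF (2*m) m hr) (bF (2*m) m hr) + X ⟨2*m, by omega⟩ ^ n) := by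
  have hd : (X ⟨2*m, by omega⟩ : MvPowerSeries (Fin (2*m+1)) k) ^ n ∣ c := by
    rw [X_pow_dvd_iff]
    intro p hp
    by_cases h : ∃ j : Fin (2*m+1), (j : ℕ) < 2 * m ∧ p j ≠ 0
    · obtain ⟨j, hj, hpj⟩ := h
      exact hc p j (mem_pairF.2 hj) hpj
    · push Not at h
      apply hJ
      have : p = Finsupp.single ⟨2*m, by omega⟩ (p ⟨2*m, by omega⟩) := by
        ext j
        by_cases hj : (j : ℕ) < 2 * m
        · rw [h j hj, Finsupp.single_apply, if_neg]
          rintro rfl; simp at hj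
        · have : j = ⟨2*m, by omega⟩ := Fin.ext (by simp; omega)
          rw [this]; simp
      rw [this]; simpa using hp
  obtain ⟨w, rfl⟩ := hd
  apply scale_rel (aF_inj _ _ _) (bF_inj _ _ _) (aF_ne_bF _ _ _)
  · have := free_X_pow (k := k) (2*m) m n hr (by omega) 1
    simpa using this
  · rw [isUnit_iff_constantCoeff, isUnit_iff_ne_zero]
    intro h0
    apply hne
    rw [X_pow_eq]
    have := coeff_add_monomial_mul (Finsupp.single (⟨2*m, by omega⟩ : Fin (2*m+1)) n) 0 w (1 : k)
    rw [add_zero] at this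
    rw [this, coeff_zero_eq_constantCoeff_apply, h0, mul_zero]

lemma even_A1 (m : ℕ) (hr : 2 * m ≤ 2 * m + 1) (F : MvPowerSeries (Fin (2*m+1)) k)
    (hF : F - hyp k (aF (2*m) m hr) (bF (2*m) m hr) - sqT (2*m) m 1 ∈ J _ k 3) : Rel F (A1ps k (2*m)) := by
  obtain ⟨c, h1, h2, h3⟩ := split_rel (aF_inj _ _ _) (bF_inj _ _ _) (aF_ne_bF _ _ _) F _ (free_sqT _ _ _ _) hF
  have hs := sqT_eq (k := k) (2*m) m 1 (by omega)
  have hJ : c ∈ J _ k 2 := by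
    have e1 : sqT (2*m) m (1 : k) ∈ J (Fin (2*m+1)) k 2 := by
      rw [hs, pow_two]
      exact Ideal.mul_mem_left _ _ (J_mul (X_mem_J _) (X_mem_J _) (by omega))
    have := add_mem (J_anti (by omega : 2 ≤ 3) h2) e1
    simpa using this
  have := h3.trans (last_var m 2 hr c h1 hJ (by
    have := h2 (Finsupp.single ⟨2*m, by omega⟩ 2) (by simp)
    rw [map_sub, sub_eq_zero] at this
    rw [this, hs, coeff_C_mul, coeff_X_pow]; simp))
  convert this using 1
  rw [A1ps, if_pos (by simp), hyp]
  congr 1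
  have hm : (2 * m + 1) / 2 = m := by omega
  apply Finset.sum_bij (fun i _ => Fin.cast hm i)
  · simp
  · intro i _ j _ h; simpa using h
  · intro j _; exact ⟨Fin.cast hm.symm j, Finset.mem_univ _, by simp⟩
  · intro i _; rfl

lemma odd_A1 (m : ℕ) (hr : 2 * (m + 1) ≤ 2 * m + 1 + 1) (ε : k) (F : MvPowerSeries (Fin (2*m+1+1)) k)
    (hF : F - hyp k (aF (2*m+1) (m+1) hr) (bF (2*m+1) (m+1) hr) - sqT (2*m+1) (m+1) ε ∈ J _ k 3) :
    Rel F (A1ps k (2*m+1)) := by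
  obtain ⟨c, h1, h2, h3⟩ := split_rel (aF_inj _ _ _) (bF_inj _ _ _) (aF_ne_bF _ _ _) F _ (free_sqT _ _ _ _) hF
  rw [sqT_eq_zero _ _ _ (by omega), sub_zero] at h2
  have hc : c = 0 := by
    ext p
    rw [map_zero]
    by_cases hp : p = 0
    · exact h2 p (by simp [hp])
    · obtain ⟨j, hj⟩ := DFunLike.ne_iff.1 hp
      exact h1 p j (mem_pairF.2 (by have := j.2; omega)) hj
  rw [hc, add_zero] at h3
  convert h3 using 1
  rw [A1ps, if_neg (by rw [Nat.even_iff]; omega), hyp, add_zero]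
  have hm : (2 * m + 1 + 1) / 2 = m + 1 := by omega
  apply Finset.sum_bij (fun i _ => Fin.cast hm i)
  · simp
  · intro i _ j _ h; simpa using h
  · intro j _; exact ⟨Fin.cast hm.symm j, Finset.mem_univ _, by simp⟩
  · intro i _; rfl

lemma even_low (m e : ℕ) (hr : 2 * m ≤ 2 * m + 1) (G : MvPowerSeries (Fin (2*m+1)) k)
    (hG : G - hyp k (aF (2*m) m hr) (bF (2*m) m hr) ∈ J _ k 3) :
    ∑ γ : Fin (2 ^ e), NN (sE e) m (beta e ((γ : ℕ) / 3)) ≤ HQ (2 ^ e) G := by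
  have : Infinite k := IsAlgClosed.instInfinite
  obtain ⟨c, h1, h2, h3⟩ := split_rel (aF_inj _ _ _) (bF_inj _ _ _) (aF_ne_bF _ _ _) G 0
    (fun _ _ _ _ => map_zero _) (by rwa [sub_zero])
  rw [sub_zero] at h2
  rw [h3.HQ_eq e]
  set z : MvPowerSeries (Fin (2*m+1)) k := X ⟨2*m, by omega⟩ with hz
  obtain ⟨t, ht, hle⟩ := HQ_semicont (2 ^ e) (hyp k (aF (2*m) m hr) (bF (2*m) m hr) + c) (z ^ 3)
    {- coeff (Finsupp.single ⟨2*m, by omega⟩ 3) c}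
  refine le_trans ?_ hle
  rw [add_assoc]
  have hrel := last_var m 3 hr (c + t • z ^ 3) (h1.add (by
      rw [smul_eq_C_mul]
      exact free_X_pow (2*m) m 3 hr (by omega) t)) (add_mem h2 (by
      rw [smul_eq_C_mul]
      apply Ideal.mul_mem_left
      rw [pow_succ]
      refine J_mul (a := 2) ?_ (X_mem_J _) (by omega)
      rw [pow_two]
      exact J_mul (X_mem_J _) (X_mem_J _) (by omega))) (by
      rw [map_add, smul_eq_C_mul, coeff_C_mul, coeff_X_pow]
      simp only [if_true, mul_one]
      intro h
      apply ht
      rw [Finset.mem_singleton]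
      linear_combination h)
  rw [hrel.HQ_eq e]
  exact even_HQ m e hr

lemma odd_low (r e : ℕ) (hr : 2 * r ≤ 2 * r + 1 + 1) (P : Prop) [Decidable P] (ε : k) (G : MvPowerSeries (Fin (2*r+1+1)) k)
    (hG : G - hyp k (aF (2*r+1) r hr) (bF (2*r+1) r hr) - (if P then 0 else sqT (2*r+1) r ε) ∈ J _ k 3) :
    (2 ^ (e+1)) ^ 2 * NN (sO e) r 0 ≤ 2 ^ e * HQ (2 ^ (e+1)) G := by
  have : Infinite k := IsAlgClosed.instInfinite
  have : CharP (MvPowerSeries (Fin (2*r+1+1)) k) 2 := charP_of_injective_ringHom (f := (C : k →+* MvPowerSeries (Fin (2*r+1+1)) k)) (C_injective) 2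
  obtain ⟨c, h1, h2, h3⟩ := split_rel (aF_inj _ _ _) (bF_inj _ _ _) (aF_ne_bF _ _ _) G _
    (by split_ifs
        · exact fun _ _ _ _ => map_zero _
        · exact free_sqT _ _ _ _) hG
  rw [h3.HQ_eq (e+1)]
  have hc : c ∈ Iq _ k 2 := by
    rw [← bpi_eq_zero_iff]
    funext p
    rw [bpi_apply, Pi.zero_apply]
    by_cases h : ∃ j : Fin (2*r+1+1), (j : ℕ) < 2 * r ∧ toExp p j ≠ 0
    · obtain ⟨j, hj, hpj⟩ := h
      exact h1 _ j (mem_pairF.2 hj) hpj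
    · push Not at h
      have hdeg : (toExp p).degree < 3 := by
        rw [Finsupp.degree_eq_sum]
        rw [Fin.sum_univ_castSucc, Fin.sum_univ_castSucc, Finset.sum_eq_zero]
        · simp only [toExp_apply]
          omega
        · intro i _
          exact h _ (by simp)
      have h4 := h2 _ hdeg
      rw [map_sub, sub_eq_zero] at h4
      rw [h4]
      split_ifs
      · simp
      · rw [sqT_eq _ _ _ (by omega), coeff_C_mul, coeff_X_pow, if_neg, mul_zero]
        intro h5
        have := DFunLike.congr_fun h5 ⟨2*r, by omega⟩
        simp only [toExp_apply, Finsupp.single_eq_same] at this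
        omega
  have hc2 : c ^ 2 ^ e ∈ Iq _ k (2 ^ (e+1)) := by
    have hle : Iq (Fin (2*r+1+1)) k 2 ≤ (Iq _ k (2 ^ (e+1))).comap (iterateFrobenius (MvPowerSeries (Fin (2*r+1+1)) k) 2 e) := by
      unfold Iq
      rw [Ideal.span_le]
      rintro _ ⟨i, rfl⟩
      simp only [SetLike.mem_coe, Ideal.mem_comap, iterateFrobenius_def]
      apply Ideal.subset_span
      exact ⟨i, by simp only; rw [← pow_mul, pow_succ, mul_comm (2 ^ e) 2]⟩
    exact hle hc
  refine le_trans ?_ (HQ_pow_le (2 ^ (e+1)) (2 ^ e) _)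
  refine le_trans (odd_HQ (k := k) r e hr) (le_of_eq ?_)
  apply HQ_congr
  rw [add_pow_char_pow, hyp, sum_pow_char_pow]
  rw [sub_add_cancel_left]
  exact neg_mem hc2

end cases
end HKdich


namespace HKdich
set_option linter.unusedSectionVars false

section final
variable {k : Type*} [Field k]

lemma mem_J_two (d : ℕ) (F : MvPowerSeries (Fin (d + 1)) k)
    (hF2 : F ∈ (Ideal.span
      (Set.range (X : Fin (d + 1) → MvPowerSeries (Fin (d + 1)) k))) ^ 2) : F ∈ J (Fin (d+1)) k 2 := by
  have h1 : Ideal.span (Set.range (X : Fin (d + 1) → MvPowerSeries (Fin (d + 1)) k)) ≤ J (Fin (d+1)) k 1 := by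
    rw [Ideal.span_le]
    rintro _ ⟨i, rfl⟩
    exact X_mem_J i
  rw [pow_two] at hF2
  have h2 := Ideal.mul_mono h1 h1 hF2
  exact (Ideal.mul_le.2 fun f hf g hg => J_mul hf hg (by omega)) h2

lemma liminf_ge (d : ℕ) (F : MvPowerSeries (Fin (d + 1)) k) (hF0 : F ≠ 0) (u : ℕ → ℝ) (s : ℝ)
    (hu : Filter.Tendsto u Filter.atTop (nhds s))
    (hle : ∀ e, u e ≤ (HQ (2 ^ (e+1)) F : ℝ) / 2 ^ (d * (e+1))) :
    s ≤ Filter.liminf (fun e : ℕ => (HKps k d 2 e F : ℝ) / 2 ^ (d * e)) Filter.atTop := by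
  obtain ⟨C, hC⟩ := upper d F hF0
  have hb : ∀ e : ℕ, (HKps k d 2 e F : ℝ) / 2 ^ (d * e) ≤ C := by
    intro e
    rw [div_le_iff₀ (by positivity)]
    have : HKps k d 2 e F ≤ C * (2 ^ e) ^ d := hC (2 ^ e)
    rw [← pow_mul, mul_comm e d] at this
    exact_mod_cast this
  rw [← Filter.liminf_nat_add _ 1, ← hu.liminf_eq]
  apply Filter.liminf_le_liminf
  · exact Filter.Eventually.of_forall hle
  · exact hu.isBoundedUnder_ge
  · apply Filter.IsBoundedUnder.isCoboundedUnder_ge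
    exact ⟨C, Filter.eventually_map.2 (Filter.Eventually.of_forall fun e => hb (e+1))⟩

lemma even_num (m e H S : ℕ) (hm : 1 ≤ m) (hS : S ≤ H)
    (h : 2 ^ e * (S : ℤ) = 2 ^ e * ((2 ^ e) ^ 2) ^ m + ∑ b ∈ Finset.range e, (2 ^ e * 2 ^ b) ^ m * 2 ^ (b + 1)) :
    (1 + 2 * (1 - ((2 : ℝ) ^ (m+1))⁻¹ ^ e) / (2 ^ (m+1) - 1)) ≤ (H : ℝ) / 2 ^ (2 * m * e) := by
  have h' : (2:ℝ) ^ e * (S : ℝ) = 2 ^ e * ((2 ^ e) ^ 2) ^ m + ∑ b ∈ Finset.range e, (2 ^ e * 2 ^ b) ^ m * 2 ^ (b + 1) := by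
    exact_mod_cast h
  have hs : ∑ b ∈ Finset.range e, ((2:ℝ) ^ e * 2 ^ b) ^ m * 2 ^ (b + 1) =
      2 * (2 ^ e) ^ m * ∑ b ∈ Finset.range e, ((2:ℝ) ^ (m+1)) ^ b := by
    rw [Finset.mul_sum]
    apply Finset.sum_congr rfl
    intro b _
    rw [mul_pow, ← pow_mul 2 (m+1) b]
    ring
  have ha : (1:ℝ) < 2 ^ (m+1) := one_lt_pow₀ (by norm_num) (by omega)
  rw [hs, geom_sum_eq ha.ne'] at h'
  have hH : (S : ℝ) / 2 ^ (2 * m * e) ≤ (H : ℝ) / 2 ^ (2 * m * e) := by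
    gcongr
  refine le_trans (le_of_eq ?_) hH
  have e1 : ((2:ℝ) ^ (m+1)) ^ e = 2 ^ e * (2 ^ e) ^ m := by
    rw [← pow_mul, ← pow_mul, ← pow_add]; congr 1; ring
  have e2 : (2:ℝ) ^ (2 * m * e) = ((2 ^ e) ^ m) ^ 2 := by
    rw [← pow_mul, ← pow_mul]; congr 1; ring
  have e3 : (((2:ℝ) ^ e) ^ 2) ^ m = ((2 ^ e) ^ m) ^ 2 := by
    rw [pow_right_comm]
  have e4 : ((2:ℝ) ^ (m+1))⁻¹ ^ e = (2 ^ e * (2 ^ e) ^ m)⁻¹ := by rw [inv_pow, e1]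
  rw [e4, e2]
  rw [e1, e3] at h'
  have hq : (0:ℝ) < 2 ^ e := by positivity
  have hq2 : (0:ℝ) < (2 ^ e) ^ m := by positivity
  generalize (2:ℝ) ^ e = q at *
  generalize q ^ m = Q at *
  generalize (2:ℝ) ^ (m+1) = a at *
  have ha' : a - 1 ≠ 0 := by linarith
  have : (S : ℝ) = (q * Q ^ 2 + 2 * Q * ((q * Q - 1) / (a - 1))) / q := by
    rw [← h']; field_simp
  rw [this]
  field_simp

lemma odd_num (r e H N : ℕ) (h1 : (2 ^ (e+1)) ^ 2 * N ≤ 2 ^ e * H)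
    (h2 : 2 * (N : ℤ) = ((2 ^ (e+1)) ^ 2) ^ r + (2 * (2 ^ e) ^ 2) ^ r) :
    ((2:ℝ) ^ r + 1) / 2 ^ r ≤ (H : ℝ) / 2 ^ ((2 * r + 1) * (e + 1)) := by
  have h1' : ((2:ℝ) ^ (e+1)) ^ 2 * N ≤ 2 ^ e * H := by exact_mod_cast h1
  have h2' : 2 * (N : ℝ) = ((2 ^ (e+1)) ^ 2) ^ r + (2 * (2 ^ e) ^ 2) ^ r := by exact_mod_cast h2
  have e1 : ((2:ℝ) ^ ((2 * r + 1) * (e + 1))) = (2 ^ r) ^ 2 * ((2 ^ e) ^ r) ^ 2 * 2 ^ e * 2 := by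
    rw [← pow_mul, ← pow_mul, ← pow_mul, ← pow_add, ← pow_add, ← pow_succ]; congr 1; ring
  have e2 : (((2:ℝ) ^ (e+1)) ^ 2) ^ r = (2 ^ r) ^ 2 * ((2 ^ e) ^ r) ^ 2 := by
    rw [← pow_mul, ← pow_mul, ← pow_mul, ← pow_mul, ← pow_mul, ← pow_add]; congr 1; ring
  have e3 : (2 * ((2:ℝ) ^ e) ^ 2) ^ r = 2 ^ r * ((2 ^ e) ^ r) ^ 2 := by
    rw [mul_pow, ← pow_mul, ← pow_mul, ← pow_mul, ← pow_mul]; congr 2; ring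
  rw [e2, e3] at h2'
  rw [e1]
  rw [pow_succ 2 e] at h1'
  have hq : (0:ℝ) < 2 ^ e := by positivity
  have hq2 : (0:ℝ) < (2 ^ e) ^ r := by positivity
  have ht : (0:ℝ) < 2 ^ r := by positivity
  generalize (2:ℝ) ^ e = q at *
  generalize q ^ r = Q at *
  generalize (2:ℝ) ^ r = t at *
  have h3 : 4 * q * N ≤ H := by
    have : q * (4 * q * N) ≤ q * H := by linarith
    exact le_of_mul_le_mul_left this hq
  have h4 : 2 * q * (t ^ 2 * Q ^ 2 + t * Q ^ 2) ≤ H := by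
    rw [← h2']; linarith
  rw [div_le_div_iff₀ ht (by positivity)]
  have := mul_le_mul_of_nonneg_right h4 ht.le
  linarith

variable [IsAlgClosed k] [CharP k 2]

lemma main_even (m : ℕ) (hm : 1 ≤ m) (F : MvPowerSeries (Fin (2 * m + 1)) k)
    (hF : F ∈ J (Fin (2*m+1)) k 2) (hF0 : F ≠ 0) :
    Rel F (A1ps k (2*m)) ∨ Filter.liminf (fun e : ℕ => (HKps k (2*m) 2 e F : ℝ) / 2 ^ (2 * m * e)) Filter.atTop ≥
          (2 ^ (m + 1) + 1) / (2 ^ (m + 1) - 1) := by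
  obtain ⟨r, hr, ε, F', hε, hrel, h⟩ := nf (2*m) F hF
  by_cases hA : r = m ∧ ε = 1
  · obtain ⟨rfl, rfl⟩ := hA
    left
    exact hrel.trans (even_A1 r hr F' h)
  right
  have hr' : 2 * m ≤ 2 * m + 1 := by omega
  have key : ∀ e, ∑ γ : Fin (2 ^ e), NN (sE e) m (beta e ((γ : ℕ) / 3)) ≤ HQ (2 ^ e) F := by
    intro e
    obtain ⟨G, hG, hG2⟩ := deform (2*m) r m hr hr' (by omega) ε F' h e
    rw [hrel.HQ_eq e]
    refine (even_low m e hr' G ?_).trans hG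
    have hz : (if r < m then 0 else sqT (2*m) m ε : MvPowerSeries (Fin (2*m+1)) k) = 0 := by
      split_ifs with hlt
      · rfl
      · have : ε = 0 := by
          rcases hε with h0 | h0
          · exact h0
          · exact absurd ⟨by omega, h0⟩ hA
        rw [sqT_eq _ _ _ (by omega), this, map_zero, zero_mul]
    rwa [hz, sub_zero] at hG2
  have ha : (1:ℝ) < 2 ^ (m+1) := one_lt_pow₀ (by norm_num) (by omega)
  apply liminf_ge (2*m) F hF0 (fun e => (1 + 2 * (1 - ((2 : ℝ) ^ (m+1))⁻¹ ^ (e+1)) / (2 ^ (m+1) - 1)))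
  · have t0 : Filter.Tendsto (fun e : ℕ => ((2 : ℝ) ^ (m+1))⁻¹ ^ (e+1)) Filter.atTop (nhds 0) :=
      (tendsto_pow_atTop_nhds_zero_of_lt_one (by positivity) (inv_lt_one_of_one_lt₀ ha)).comp
        (Filter.tendsto_add_atTop_nat 1)
    have t1 := (((t0.const_sub 1).const_mul 2).div_const ((2:ℝ) ^ (m+1) - 1)).const_add 1
    convert t1 using 2
    have : (2:ℝ) ^ (m+1) - 1 ≠ 0 := by linarith
    field_simp
    ring
  · intro e
    exact even_num m (e+1) _ _ hm (key (e+1)) (even_count (e+1) m hm)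

lemma main_odd (m : ℕ) (hm : 1 ≤ m) (F : MvPowerSeries (Fin (2 * m + 1 + 1)) k)
    (hF : F ∈ J (Fin (2*m+1+1)) k 2) (hF0 : F ≠ 0) :
    Rel F (A1ps k (2*m+1)) ∨ Filter.liminf (fun e : ℕ => (HKps k (2*m+1) 2 e F : ℝ) / 2 ^ ((2 * m + 1) * e)) Filter.atTop ≥
          (2 ^ m + 1) / 2 ^ m := by
  obtain ⟨r, hr, ε, F', hε, hrel, h⟩ := nf (2*m+1) F hF
  by_cases hA : r = m + 1
  · subst hA
    left
    exact hrel.trans (odd_A1 m hr ε F' h)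
  right
  have hr' : 2 * m ≤ 2 * m + 1 + 1 := by omega
  apply liminf_ge (2*m+1) F hF0 (fun e => ((2:ℝ) ^ m + 1) / 2 ^ m) _ tendsto_const_nhds
  intro e
  obtain ⟨G, hG, hG2⟩ := deform (2*m+1) r m hr hr' (by omega) ε F' h (e+1)
  rw [hrel.HQ_eq (e+1)]
  have h1 := odd_low m e hr' (r < m) ε G hG2
  exact odd_num m e _ _ (h1.trans (Nat.mul_le_mul_left _ hG)) (odd_count e m hm)

end final
end HKdich

theorem hypersurface_dichotomy_char_two (k : Type*) [Field k] [IsAlgClosed k] [CharP k 2]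
    (d : ℕ) (hd : 2 ≤ d) (F : MvPowerSeries (Fin (d + 1)) k)
    (hF2 : F ∈ (Ideal.span
      (Set.range (X : Fin (d + 1) → MvPowerSeries (Fin (d + 1)) k))) ^ 2)
    (hF0 : F ≠ 0) :
    Nonempty ((MvPowerSeries (Fin (d + 1)) k ⧸
        (Ideal.span {F} : Ideal (MvPowerSeries (Fin (d + 1)) k))) ≃+*
      (MvPowerSeries (Fin (d + 1)) k ⧸
        (Ideal.span {A1ps k d} : Ideal (MvPowerSeries (Fin (d + 1)) k)))) ∨
    ((∀ m : ℕ, d = 2 * m →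
        Filter.liminf (fun e : ℕ => (HKps k d 2 e F : ℝ) / 2 ^ (d * e)) Filter.atTop ≥
          (2 ^ (m + 1) + 1) / (2 ^ (m + 1) - 1)) ∧
      (∀ m : ℕ, d = 2 * m - 1 →
        Filter.liminf (fun e : ℕ => (HKps k d 2 e F : ℝ) / 2 ^ (d * e)) Filter.atTop ≥
          (2 ^ (m - 1) + 1) / 2 ^ (m - 1))) := by
  have hF := HKdich.mem_J_two d F hF2
  rcases Nat.even_or_odd' d with ⟨n, rfl | rfl⟩
  · rcases HKdich.main_even n (by omega) F hF hF0 with h | h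
    · exact Or.inl h.quot
    · refine Or.inr ⟨fun m hm => ?_, fun m hm => ?_⟩
      · obtain rfl : n = m := by omega
        exact h
      · exfalso; omega
  · rcases HKdich.main_odd n (by omega) F hF hF0 with h | h
    · exact Or.inl h.quot
    · refine Or.inr ⟨fun m hm => ?_, fun m hm => ?_⟩
      · exfalso; omega
      · obtain rfl : n = m - 1 := by omega
        exact h
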